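/- arXiv:2106.04029 — 8 statements merged into one kernel-verified Lean document; each statement's English description precedes it below -/
import Mathlib

section
/- Let n ≥ 2, δ ∈ [0,1), B = (1+δ)/(1−δ), and let u : ℕ → ℝ be a utility basis with u(0) = 0, u(1) = 1 and u(j) ≥ 0 for all j. Set X = max over j ∈ {1,…,n−1} of max{ B·(j+1)·u(j+1), B·j·u(j+1) + 1, B·j·u(j) − u(j+1) + 1 }. Then for every set covering game with at most n agents, utility basis u, and uncertainty at most δ, every equilibrium a, and every joint action a', it holds that W(a'; y_true) ≤ X · W(a; y_true). -/
/-!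
The proof is a smoothness argument, carried out resource by resource. For a resource `r`, let
`ℓ = |a|_r`, and let `p`, `q`, `x` be the numbers of agents that use `r` in `a` only, in `a'` only,
and in both, so that `p + x = ℓ`, `q + x = |a'|_r` and `p + q + x ≤ n`.

When agent `i` deviates from `a_i` to `a'_i`, resources in `a_i ∩ a'_i` contribute the same to both
utilities, and a resource in `a'_i \ a_i` is met at load `ℓ + 1`. Hence the equilibrium condition
compares the resources in `a_i \ a'_i` with those in `a'_i \ a_i` (`equilibrium_diff`). Replacing
perceived values by true ones and summing over the agents gives
`(1 - δ) Σ_r y(r) q u(ℓ + 1) ≤ (1 + δ) Σ_r y(r) p u(ℓ)` (`equilibrium_sum`).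

It remains to check `w(q + x) + B p u(ℓ) - q u(ℓ + 1) ≤ X w(ℓ)` for each resource
(`resource_bound`). Resources unused in `a` need only `u 1 = 1`; for the others the three families of
terms in `X` cover the cases.
-/

open Finset Filter

/-- A resource allocation game with `n` agents: a finite set of resources
(encoded as a `Finset ℕ`), nonempty finite action sets consisting of subsets of
the resources, true resource values and perceived resource values. -/
structure ResourceGame (n : ℕ) where
  R : Finset ℕ
  A : Fin n → Finset (Finset ℕ)
  A_nonempty : ∀ i, (A i).Nonempty
  A_sub : ∀ i, ∀ s ∈ A i, s ⊆ R
  ytrue : ℕ → ℝ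
  ytrue_pos : ∀ r ∈ R, 0 < ytrue r
  y : Fin n → ℕ → ℝ
  y_nonneg : ∀ i r, 0 ≤ y i r

/-- A joint action is admissible if each agent's action belongs to its action set. -/
def Admissible {n : ℕ} (G : ResourceGame n) (a : Fin n → Finset ℕ) : Prop :=
  ∀ i, a i ∈ G.A i

/-- `|a|_r`: the number of agents selecting resource `r` in joint action `a`. -/
def load {n : ℕ} (a : Fin n → Finset ℕ) (r : ℕ) : ℕ :=
  (Finset.univ.filter (fun i => r ∈ a i)).card

/-- The welfare `W(a; val) = Σ_{r ∈ R} val(r)·w(|a|_r)`. -/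
noncomputable def welfare {n : ℕ} (G : ResourceGame n) (w : ℕ → ℝ) (val : ℕ → ℝ)
    (a : Fin n → Finset ℕ) : ℝ :=
  ∑ r ∈ G.R, val r * w (load a r)

/-- The utility of agent `i`: `U_i(a) = Σ_{r ∈ a_i} y_i(r)·u(|a|_r)`. -/
noncomputable def util {n : ℕ} (G : ResourceGame n) (u : ℕ → ℝ) (i : Fin n)
    (a : Fin n → Finset ℕ) : ℝ :=
  ∑ r ∈ a i, G.y i r * u (load a r)

/-- A joint action is an equilibrium if it is admissible and no agent can improve
its own utility by unilaterally deviating to another admissible action. -/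
def IsEquilibrium {n : ℕ} (G : ResourceGame n) (u : ℕ → ℝ) (a : Fin n → Finset ℕ) : Prop :=
  Admissible G a ∧
    ∀ i : Fin n, ∀ s ∈ G.A i, util G u i (Function.update a i s) ≤ util G u i a

/-- The game has uncertainty at most `δ`:
`(1−δ)·y_true(r) ≤ y_i(r) ≤ (1+δ)·y_true(r)` for all agents `i` and resources `r`. -/
def Uncertain {n : ℕ} (G : ResourceGame n) (δ : ℝ) : Prop :=
  ∀ i : Fin n, ∀ r ∈ G.R,
    (1 - δ) * G.ytrue r ≤ G.y i r ∧ G.y i r ≤ (1 + δ) * G.ytrue r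

/-- The optimal (maximal) welfare `max_{a'} W(a'; y_true)` of a game. -/
noncomputable def optWelfare {n : ℕ} (G : ResourceGame n) (w : ℕ → ℝ) : ℝ :=
  sSup {x : ℝ | ∃ a, Admissible G a ∧ x = welfare G w G.ytrue a}

/-- The price of anarchy of the class `Γ^δ_{w,u,n}` of games with at most `n` agents,
basis functions `w, u`, and uncertainty at most `δ`: the infimum over games in the
class and equilibria `a` of `W(a; y_true)/max_{a'} W(a'; y_true)`. -/
noncomputable def PoA (w u : ℕ → ℝ) (δ : ℝ) (n : ℕ) : ℝ :=
  sInf {q : ℝ | ∃ m : ℕ, 1 ≤ m ∧ m ≤ n ∧ ∃ G : ResourceGame m,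
    Uncertain G δ ∧ ∃ a, IsEquilibrium G u a ∧
      q = welfare G w G.ytrue a / optWelfare G w}

/-- The set covering welfare basis: `w_sc(0) = 0` and `w_sc(k) = 1` for `k ≥ 1`. -/
noncomputable def wsc : ℕ → ℝ := fun k => if k = 0 then 0 else 1

/-- The number of agents that use `r` in `a` but not in `b`. -/
def loadDiff {m : ℕ} (a b : Fin m → Finset ℕ) (r : ℕ) : ℕ :=
  (Finset.univ.filter (fun i => r ∈ a i \ b i)).card

/-- The number of agents that use `r` in both `a` and `b`. -/
def loadInter {m : ℕ} (a b : Fin m → Finset ℕ) (r : ℕ) : ℕ :=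
  (Finset.univ.filter (fun i => r ∈ a i ∩ b i)).card

lemma loadDiff_add_loadInter {m : ℕ} (a b : Fin m → Finset ℕ) (r : ℕ) :
    loadDiff a b r + loadInter a b r = load a r := by
  unfold loadDiff loadInter load
  rw [← Finset.card_union_of_disjoint]
  · congr 1
    ext i
    simp only [mem_union, mem_filter, mem_univ, true_and, Finset.mem_sdiff, mem_inter]
    tauto
  · rw [Finset.disjoint_left]
    intro i
    simp only [mem_filter, mem_univ, true_and, Finset.mem_sdiff, mem_inter]
    tauto

lemma loadInter_comm {m : ℕ} (a b : Fin m → Finset ℕ) (r : ℕ) :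
    loadInter a b r = loadInter b a r := by
  simp only [loadInter, Finset.inter_comm]

lemma load_add_loadDiff_le {m : ℕ} (a b : Fin m → Finset ℕ) (r : ℕ) :
    load a r + loadDiff b a r ≤ m := by
  unfold loadDiff load
  rw [← Finset.card_union_of_disjoint]
  · exact (Finset.card_le_univ _).trans (by simp)
  · rw [Finset.disjoint_left]
    intro i
    simp only [mem_filter, mem_univ, true_and, Finset.mem_sdiff]
    tauto

lemma load_update_of_mem {m : ℕ} (a : Fin m → Finset ℕ) (i : Fin m) (s : Finset ℕ) (r : ℕ)
    (hs : r ∈ s) (hr : r ∈ a i) : load (Function.update a i s) r = load a r := by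
  unfold load
  congr 1
  ext j
  by_cases h : j = i
  · subst h; simp [hs, hr]
  · simp [h]

lemma load_update_of_notMem {m : ℕ} (a : Fin m → Finset ℕ) (i : Fin m) (s : Finset ℕ) (r : ℕ)
    (hs : r ∈ s) (hr : r ∉ a i) : load (Function.update a i s) r = load a r + 1 := by
  unfold load
  rw [← Finset.card_insert_of_notMem (a := i) (by simp [hr])]
  congr 1
  ext j
  by_cases h : j = i
  · subst h; simp [hs]
  · simp [h]

/-- The equilibrium inequality after cancelling the resources in both `a i` and `s`, whose load
is unchanged by the deviation. -/
lemma equilibrium_diff {m : ℕ} (G : ResourceGame m) (u : ℕ → ℝ) (a : Fin m → Finset ℕ)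
    (ha : IsEquilibrium G u a) (i : Fin m) (s : Finset ℕ) (hs : s ∈ G.A i) :
    ∑ r ∈ s \ a i, G.y i r * u (load a r + 1) ≤ ∑ r ∈ a i \ s, G.y i r * u (load a r) := by
  have h := ha.2 i s hs
  unfold util at h
  rw [Function.update_self] at h
  rw [← Finset.sum_inter_add_sum_sdiff s (a i), ← Finset.sum_inter_add_sum_sdiff (a i) s,
    Finset.inter_comm (a i) s] at h
  have h1 : ∑ r ∈ s ∩ a i, G.y i r * u (load (Function.update a i s) r)
      = ∑ r ∈ s ∩ a i, G.y i r * u (load a r) := by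
    refine Finset.sum_congr rfl fun r hr => ?_
    rw [Finset.mem_inter] at hr
    rw [load_update_of_mem a i s r hr.1 hr.2]
  have h2 : ∑ r ∈ s \ a i, G.y i r * u (load (Function.update a i s) r)
      = ∑ r ∈ s \ a i, G.y i r * u (load a r + 1) := by
    refine Finset.sum_congr rfl fun r hr => ?_
    rw [Finset.mem_sdiff] at hr
    rw [load_update_of_notMem a i s r hr.1 hr.2]
  linarith

/-- Double counting: summing over agents and the resources of `a i \ b i` counts each resource
`loadDiff a b r` times. -/
lemma sum_sdiff_eq {m : ℕ} (R : Finset ℕ) (a b : Fin m → Finset ℕ) (hR : ∀ i, a i ⊆ R)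
    (f : ℕ → ℝ) :
    ∑ i, ∑ r ∈ a i \ b i, f r = ∑ r ∈ R, (loadDiff a b r : ℝ) * f r := by
  have h : ∀ i, ∑ r ∈ a i \ b i, f r = ∑ r ∈ R, if r ∈ a i \ b i then f r else 0 := by
    intro i
    rw [← Finset.sum_filter]
    congr 1
    ext r
    rw [Finset.mem_filter]
    exact ⟨fun hr => ⟨hR i (Finset.mem_sdiff.mp hr).1, hr⟩, fun hr => hr.2⟩
  simp_rw [h]
  rw [Finset.sum_comm]
  refine Finset.sum_congr rfl fun r _ => ?_
  rw [← Finset.sum_filter, Finset.sum_const, nsmul_eq_mul, loadDiff]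

lemma equilibrium_sum {m : ℕ} (G : ResourceGame m) (u : ℕ → ℝ) (hupos : ∀ j, 0 ≤ u j) (δ : ℝ)
    (hG : Uncertain G δ) (a : Fin m → Finset ℕ) (ha : IsEquilibrium G u a)
    (a' : Fin m → Finset ℕ) (ha' : Admissible G a') :
    (1 - δ) * ∑ r ∈ G.R, (loadDiff a' a r : ℝ) * (G.ytrue r * u (load a r + 1))
      ≤ (1 + δ) * ∑ r ∈ G.R, (loadDiff a a' r : ℝ) * (G.ytrue r * u (load a r)) := by
  have hsub : ∀ i, a i ⊆ G.R := fun i => G.A_sub i _ (ha.1 i)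
  have hsub' : ∀ i, a' i ⊆ G.R := fun i => G.A_sub i _ (ha' i)
  rw [← sum_sdiff_eq G.R a' a hsub', ← sum_sdiff_eq G.R a a' hsub, Finset.mul_sum, Finset.mul_sum]
  refine Finset.sum_le_sum fun i _ => ?_
  rw [Finset.mul_sum, Finset.mul_sum]
  calc _ ≤ ∑ r ∈ a' i \ a i, G.y i r * u (load a r + 1) := by
        refine Finset.sum_le_sum fun r hr => ?_
        rw [← mul_assoc]
        exact mul_le_mul_of_nonneg_right
          (hG i r (hsub' i (Finset.mem_sdiff.mp hr).1)).1 (hupos _)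
    _ ≤ ∑ r ∈ a i \ a' i, G.y i r * u (load a r) := equilibrium_diff G u a ha i _ (ha' i)
    _ ≤ _ := by
        refine Finset.sum_le_sum fun r hr => ?_
        rw [← mul_assoc]
        exact mul_le_mul_of_nonneg_right
          (hG i r (hsub i (Finset.mem_sdiff.mp hr).1)).2 (hupos _)

/-- The smoothness inequality for one resource used by `p` agents in `a` only, `q` agents in `a'`
only and `x` agents in both. -/
lemma resource_bound (n : ℕ) (hn : 2 ≤ n) (B : ℝ) (hB : 0 ≤ B) (u : ℕ → ℝ) (hu1 : u 1 = 1)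
    (hupos : ∀ j, 0 ≤ u j) (X : ℝ)
    (h1 : ∀ j : ℕ, 1 ≤ j → j + 1 ≤ n → B * ((j : ℝ) + 1) * u (j + 1) ≤ X)
    (h2 : ∀ j : ℕ, 1 ≤ j → j + 1 ≤ n → B * (j : ℝ) * u (j + 1) + 1 ≤ X)
    (h3 : ∀ j : ℕ, 1 ≤ j → j + 1 ≤ n → B * (j : ℝ) * u j - u (j + 1) + 1 ≤ X)
    (p q x : ℕ) (hpqx : p + x + q ≤ n) :
    wsc (q + x) + B * (p * u (p + x)) - q * u (p + x + 1) ≤ X * wsc (p + x) := by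
  have hX1 : 1 ≤ X := by
    have := h2 1 le_rfl hn
    have h0 : 0 ≤ B * ((1 : ℕ) : ℝ) * u (1 + 1) := by have := hupos (1 + 1); positivity
    linarith
  have hqu : 0 ≤ (q : ℝ) * u (p + x + 1) := mul_nonneg (Nat.cast_nonneg _) (hupos _)
  rcases Nat.eq_zero_or_pos x with rfl | hx
  · rcases Nat.eq_zero_or_pos p with rfl | hp
    · -- An unused resource: `u 1 = 1` makes each new user pay for the welfare gained.
      rcases Nat.eq_zero_or_pos q with rfl | hq
      · simp [wsc]
      · have : (1 : ℝ) ≤ q := by exact_mod_cast hq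
        simp [wsc, hu1, hq.ne']
        linarith
    · rcases Nat.eq_zero_or_pos q with rfl | hq
      · have key : B * (p * u p) ≤ X := by
          obtain ⟨j, rfl⟩ : ∃ j, p = j + 1 := ⟨p - 1, by omega⟩
          rcases Nat.eq_zero_or_pos j with rfl | hj
          · -- `B ≤ X` comes from the third family if `u 2 ≤ 1` and from the second otherwise.
            have e2 := h2 1 le_rfl hn
            have e3 := h3 1 le_rfl hn
            norm_num [hu1] at e2 e3 ⊢
            rcases le_total (u 2) 1 with h | h
            · linarith
            · nlinarith
          · have := h1 j hj (by omega)
            push_cast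
            linarith
        simp [wsc, hp.ne']
        linarith
      · have e3 := h3 p hp (by omega)
        have hq1 : u (p + 1) ≤ q * u (p + 1) :=
          le_mul_of_one_le_left (hupos _) (by exact_mod_cast hq)
        simp [wsc, hp.ne', hq.ne']
        linarith
  · have key : B * (p * u (p + x)) + 1 ≤ X := by
      rcases Nat.eq_zero_or_pos p with rfl | hp
      · simpa using hX1
      · -- Here the load is `j + 1` with `p ≤ j`.
        obtain ⟨j, hj⟩ : ∃ j, p + x = j + 1 := ⟨p + x - 1, by omega⟩
        have e2 := h2 j (by omega) (by omega)
        have hpj : (p : ℝ) ≤ j := by exact_mod_cast (show p ≤ j by omega)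
        rw [hj]
        have := mul_le_mul_of_nonneg_left
          (mul_le_mul_of_nonneg_right hpj (hupos (j + 1))) hB
        linarith
    simp [wsc, hx.ne']
    linarith

/-- with
`X = max_{j∈[1,n−1]} max{B(j+1)u(j+1), Bju(j+1)+1, Bju(j)−u(j+1)+1}`, for every set
covering game with at most `n` agents, utility basis `u` and uncertainty at most `δ`,
every equilibrium `a` and every admissible joint action `a'`,
`W(a'; y_true) ≤ X·W(a; y_true)`. -/
theorem setCovering_welfare_le (n : ℕ) (hn : 2 ≤ n) (δ : ℝ) (hδ0 : 0 ≤ δ) (hδ1 : δ < 1)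
    (B : ℝ) (hB : B = (1 + δ) / (1 - δ))
    (u : ℕ → ℝ) (hu0 : u 0 = 0) (hu1 : u 1 = 1) (hupos : ∀ j, 0 ≤ u j)
    (X : ℝ)
    (hX : X = (Finset.Icc 1 (n - 1)).sup' (Finset.nonempty_Icc.mpr (by omega))
      (fun j =>
        max (max (B * ((j : ℝ) + 1) * u (j + 1)) (B * (j : ℝ) * u (j + 1) + 1))
          (B * (j : ℝ) * u j - u (j + 1) + 1)))
    (m : ℕ) (hm : m ≤ n) (G : ResourceGame m) (hG : Uncertain G δ)
    (a : Fin m → Finset ℕ) (ha : IsEquilibrium G u a)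
    (a' : Fin m → Finset ℕ) (ha' : Admissible G a') :
    welfare G wsc G.ytrue a' ≤ X * welfare G wsc G.ytrue a := by
  have hd : 0 < 1 - δ := by linarith
  have hB0 : 0 ≤ B := by rw [hB]; exact div_nonneg (by linarith) hd.le
  have hBd : B * (1 - δ) = 1 + δ := by rw [hB]; field_simp
  have hmax : ∀ j : ℕ, 1 ≤ j → j + 1 ≤ n →
      max (max (B * ((j : ℝ) + 1) * u (j + 1)) (B * (j : ℝ) * u (j + 1) + 1))
          (B * (j : ℝ) * u j - u (j + 1) + 1) ≤ X := by
    intro j hj1 hj2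
    rw [hX]
    exact Finset.le_sup' (fun j : ℕ =>
        max (max (B * ((j : ℝ) + 1) * u (j + 1)) (B * (j : ℝ) * u (j + 1) + 1))
          (B * (j : ℝ) * u j - u (j + 1) + 1)) (Finset.mem_Icc.mpr ⟨hj1, by omega⟩)
  have hres : ∀ r, wsc (load a' r) + B * (loadDiff a a' r * u (load a r))
      - loadDiff a' a r * u (load a r + 1) ≤ X * wsc (load a r) := by
    intro r
    have e1 := loadDiff_add_loadInter a a' r
    have e2 := loadDiff_add_loadInter a' a r
    rw [loadInter_comm a' a] at e2
    have e3 := load_add_loadDiff_le a a' r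
    rw [← e1, ← e2]
    exact resource_bound n hn B hB0 u hu1 hupos X
      (fun j h h' => (le_max_left _ _).trans ((le_max_left _ _).trans (hmax j h h')))
      (fun j h h' => (le_max_right _ _).trans ((le_max_left _ _).trans (hmax j h h')))
      (fun j h h' => (le_max_right _ _).trans (hmax j h h')) _ _ _ (by omega)
  have heq : ∑ r ∈ G.R, (loadDiff a' a r : ℝ) * (G.ytrue r * u (load a r + 1))
      ≤ B * ∑ r ∈ G.R, (loadDiff a a' r : ℝ) * (G.ytrue r * u (load a r)) := by
    have h := equilibrium_sum G u hupos δ hG a ha a' ha'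
    rw [← hBd] at h
    refine le_of_mul_le_mul_left ?_ hd
    linarith
  have hsum : welfare G wsc G.ytrue a'
      + B * ∑ r ∈ G.R, (loadDiff a a' r : ℝ) * (G.ytrue r * u (load a r))
      - ∑ r ∈ G.R, (loadDiff a' a r : ℝ) * (G.ytrue r * u (load a r + 1))
      ≤ X * welfare G wsc G.ytrue a := by
    unfold welfare
    rw [Finset.mul_sum, Finset.mul_sum, ← Finset.sum_add_distrib, ← Finset.sum_sub_distrib]
    refine Finset.sum_le_sum fun r hr => ?_
    have := mul_le_mul_of_nonneg_left (hres r) (G.ytrue_pos r hr).le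
    linarith
  linarith
end

section
/- Let n ≥ 2, δ ∈ [0,1), B = (1+δ)/(1−δ), and let u : ℕ → ℝ be any utility basis with u(0) = 0 and u(1) = 1. Then there exists a set covering game with n agents, utility basis u, and uncertainty at most δ, together with an equilibrium a and a joint action a', such that W(a; y_true) = [1 − 1/(1/(B^n·(n−1)·(n−1)!) + Σ_{k=0}^{n−1} B^{−k}/k!)] · W(a'; y_true). In particular, PoA(Γ^δ_{w_sc,u,n}) ≤ 1 − 1/(1/(B^n·(n−1)·(n−1)!) + Σ_{k=0}^{n−1} B^{−k}/k!). -/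
/-!
The worst case is a cyclically symmetric game that does not depend on the utility basis `u`.
Resources are pairs `(j, c)` with `j ∈ {0, …, n}` and `c ∈ {0, …, n - 1}`, of true value
`θ_j = B^{-j} / j!` for `j < n` and `θ_n = 1 / (B^n (n - 1) (n - 1)!)`. In the equilibrium `a`,
agent `i` selects `(j, c)` when `(i + c) mod n < j`, so that `(j, c)` has load `j`; in the
alternative `a'` it selects `(j, c)` when `(i + c) mod n = n - 1`, so that every resource has
load one. Agents overvalue by `1 + δ` what they select in `a` and undervalue the rest by `1 - δ`.

Agent `i` obtains `(1 + δ) ∑_{j ≤ n} j θ_j u(j)` in `a`, and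
`(1 - δ) ∑_{j < n} θ_j u(j + 1) + (1 + δ) θ_n u(n)` after deviating to its action in `a'`.
The values `θ_j` satisfy the recursions `B j θ_j = θ_{j-1}` (`0 < j < n`) and
`B (n - 1) θ_n = θ_{n-1}`, which make these equal term by term for every `u`
(`sum_thetaVal_balance`); hence `a` is an equilibrium. Since `a` misses exactly the resources with
`j = 0`, whose value is `θ_0 = 1`, the two welfares are `n (D - 1)` and `n D` with
`D = ∑_{j ≤ n} θ_j`, so their ratio is `1 - 1 / D`. As `W(a') > 0` and the optimal welfare is at
least `W(a')`, this single game also bounds the price of anarchy.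
-/

open Finset Filter

/-! ### Sums over resources and cyclic shifts -/

/-- Summation over pairs `(j, c)` encoded as the natural number `j * n + c`. -/
lemma sum_range_mul_divMod (n : ℕ) (hn : 0 < n) (m : ℕ) (f : ℕ → ℕ → ℝ) :
    ∑ r ∈ range (m * n), f (r / n) (r % n) = ∑ j ∈ range m, ∑ c ∈ range n, f j c := by
  induction m with
  | zero => simp
  | succ m ih =>
    rw [Nat.succ_mul, Finset.sum_range_add, ih, Finset.sum_range_succ]
    congr 1
    refine Finset.sum_congr rfl fun c hc => ?_
    have hc' := Finset.mem_range.1 hc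
    rw [Nat.mul_add_mod', Nat.mod_eq_of_lt hc', mul_comm m n, Nat.mul_add_div hn,
      Nat.div_eq_of_lt hc', add_zero]

/-- A sum over a full period is invariant under a cyclic shift. -/
lemma sum_range_add_mod {M : Type*} [AddCancelCommMonoid M] (n : ℕ) (g : ℕ → M) (i : ℕ) :
    ∑ c ∈ range n, g ((i + c) % n) = ∑ d ∈ range n, g d := by
  induction i with
  | zero =>
    refine Finset.sum_congr rfl fun c hc => ?_
    rw [zero_add, Nat.mod_eq_of_lt (Finset.mem_range.1 hc)]
  | succ i ih =>
    rw [← ih]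
    have h1 := Finset.sum_range_succ (fun c => g ((i + c) % n)) n
    have h2 := Finset.sum_range_succ' (fun c => g ((i + c) % n)) n
    rw [h1] at h2
    simp only [Nat.add_mod_right, add_zero] at h2
    rw [add_right_cancel h2]
    refine Finset.sum_congr rfl fun c _ => ?_
    rw [show i + 1 + c = i + (c + 1) by ring]

lemma card_filter_add_mod (n c : ℕ) (p : ℕ → Prop) [DecidablePred p] :
    (univ.filter fun i : Fin n => p ((i + c) % n)).card = ((range n).filter p).card := by
  rw [Finset.card_filter, Finset.card_filter,
    ← sum_range_add_mod n (fun d => if p d then 1 else 0) c,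
    ← Fin.sum_univ_eq_sum_range (fun i => if p ((c + i) % n) then 1 else 0)]
  simp only [add_comm]

/-! ### Resource values -/

/-- The true value `θ_j` of the resources `(j, c)`, for `j ≤ n`. -/
noncomputable def thetaVal (n : ℕ) (B : ℝ) (j : ℕ) : ℝ :=
  if j < n then (B ^ j)⁻¹ / (Nat.factorial j : ℝ)
  else 1 / (B ^ n * ((n : ℝ) - 1) * (Nat.factorial (n - 1) : ℝ))

lemma thetaVal_pos {n : ℕ} (hn : 2 ≤ n) {B : ℝ} (hB : 0 < B) (j : ℕ) : 0 < thetaVal n B j := by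
  have h : (0 : ℝ) < (n : ℝ) - 1 := by
    have : (2 : ℝ) ≤ n := by exact_mod_cast hn
    linarith
  unfold thetaVal
  split_ifs <;> positivity

/-- The utility of an agent in the equilibrium (left) equals its utility after deviating (right),
for every utility basis `u`. -/
lemma sum_thetaVal_balance {n : ℕ} (hn : 2 ≤ n) {δ : ℝ} (hδ0 : 0 ≤ δ) (hδ1 : δ < 1)
    (u : ℕ → ℝ) :
    ∑ j ∈ range (n + 1), (1 + δ) * (j * (thetaVal n ((1 + δ) / (1 - δ)) j * u j)) =
      (∑ j ∈ range n, (1 - δ) * (thetaVal n ((1 + δ) / (1 - δ)) j * u (j + 1))) +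
        (1 + δ) * (thetaVal n ((1 + δ) / (1 - δ)) n * u n) := by
  obtain ⟨m, rfl⟩ : ∃ m, n = m + 1 := ⟨n - 1, by omega⟩
  have hp : (0 : ℝ) < 1 + δ := by linarith
  have hq : (0 : ℝ) < 1 - δ := by linarith
  have hm : (m : ℝ) ≠ 0 := by
    have : m ≠ 0 := by omega
    exact_mod_cast this
  rw [Finset.sum_range_succ', Finset.sum_range_succ, Finset.sum_range_succ (n := m)]
  have h1 : ∀ j ∈ range m,
      (1 + δ) * (((j + 1 : ℕ) : ℝ) * (thetaVal (m + 1) ((1 + δ) / (1 - δ)) (j + 1) * u (j + 1)))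
        = (1 - δ) * (thetaVal (m + 1) ((1 + δ) / (1 - δ)) j * u (j + 1)) := by
    intro j hj
    have hj' := Finset.mem_range.1 hj
    have hf : (Nat.factorial j : ℝ) ≠ 0 := by positivity
    have hj0 : (j : ℝ) + 1 ≠ 0 := by positivity
    rw [thetaVal, thetaVal, if_pos (by omega), if_pos (by omega), Nat.factorial_succ]
    push_cast
    rw [pow_succ]
    field_simp
  have h2 : (1 + δ) * (((m + 1 : ℕ) : ℝ) *
      (thetaVal (m + 1) ((1 + δ) / (1 - δ)) (m + 1) * u (m + 1))) =
      (1 - δ) * (thetaVal (m + 1) ((1 + δ) / (1 - δ)) m * u (m + 1)) +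
      (1 + δ) * (thetaVal (m + 1) ((1 + δ) / (1 - δ)) (m + 1) * u (m + 1)) := by
    have hf : (Nat.factorial m : ℝ) ≠ 0 := by positivity
    rw [thetaVal, thetaVal, if_neg (by omega), if_pos (by omega), Nat.add_sub_cancel]
    push_cast
    rw [pow_succ, add_sub_cancel_right]
    field_simp
  rw [Finset.sum_congr rfl h1, h2]
  simp
  ring

/-! ### The cyclic game and its loads -/

/-- The action of agent `i` in the equilibrium. -/
def eqAct (n : ℕ) (i : Fin n) : Finset ℕ :=
  (range ((n + 1) * n)).filter fun r => (i + r % n) % n < r / n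

/-- The alternative action of agent `i`. -/
def altAct (n : ℕ) (i : Fin n) : Finset ℕ :=
  (range ((n + 1) * n)).filter fun r => (i + r % n) % n = n - 1

/-- The worst-case game; the resource `(j, c)` is encoded as `j * n + c`. Perceived values are only
relevant on the resources, but the encoding makes them nonnegative on all of `ℕ`. -/
noncomputable def cyclicGame (n : ℕ) (hn : 2 ≤ n) (δ : ℝ) (hδ0 : 0 ≤ δ) (hδ1 : δ < 1) :
    ResourceGame n where
  R := range ((n + 1) * n)
  A i := {eqAct n i, altAct n i}
  A_nonempty i := ⟨eqAct n i, by simp⟩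
  A_sub i s hs := by
    rcases Finset.mem_insert.1 hs with rfl | hs
    · exact Finset.filter_subset _ _
    · rw [Finset.mem_singleton.1 hs]
      exact Finset.filter_subset _ _
  ytrue r := thetaVal n ((1 + δ) / (1 - δ)) (r / n)
  ytrue_pos r _ := thetaVal_pos hn (div_pos (by linarith) (by linarith)) _
  y i r := (if (i + r % n) % n < r / n then 1 + δ else 1 - δ) *
    thetaVal n ((1 + δ) / (1 - δ)) (r / n)
  y_nonneg i r := by
    refine mul_nonneg ?_ (thetaVal_pos hn (div_pos (by linarith) (by linarith)) _).le
    split_ifs <;> linarith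

lemma cyclicGame_uncertain (n : ℕ) (hn : 2 ≤ n) (δ : ℝ) (hδ0 : 0 ≤ δ) (hδ1 : δ < 1) :
    Uncertain (cyclicGame n hn δ hδ0 hδ1) δ := by
  intro i r _
  have h := thetaVal_pos hn (B := (1 + δ) / (1 - δ)) (div_pos (by linarith) (by linarith)) (r / n)
  simp only [cyclicGame]
  constructor <;> refine mul_le_mul_of_nonneg_right ?_ h.le <;> split_ifs <;> linarith

lemma load_eqAct {n r : ℕ} (hr : r ∈ range ((n + 1) * n)) : load (eqAct n) r = r / n := by
  have hr' := Finset.mem_range.1 hr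
  have hle : r / n ≤ n := Nat.lt_succ_iff.1 (Nat.div_lt_of_lt_mul (by rwa [mul_comm] at hr'))
  have : (univ.filter fun i : Fin n => r ∈ eqAct n i) =
      univ.filter fun i : Fin n => (i + r % n) % n < r / n := by
    ext i
    simp [eqAct, hr']
  rw [load, this, card_filter_add_mod n (r % n) (fun d => d < r / n)]
  have : ((range n).filter fun d => d < r / n) = range (r / n) := by
    ext d
    simp only [Finset.mem_filter, Finset.mem_range]
    omega
  rw [this, Finset.card_range]

lemma load_altAct {n r : ℕ} (hn : 0 < n) (hr : r ∈ range ((n + 1) * n)) :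
    load (altAct n) r = 1 := by
  have hr' := Finset.mem_range.1 hr
  have : (univ.filter fun i : Fin n => r ∈ altAct n i) =
      univ.filter fun i : Fin n => (i + r % n) % n = n - 1 := by
    ext i
    simp [altAct, hr']
  rw [load, this, card_filter_add_mod n (r % n) (fun d => d = n - 1)]
  have : ((range n).filter fun d => d = n - 1) = {n - 1} := by
    ext d
    simp only [Finset.mem_filter, Finset.mem_range, Finset.mem_singleton]
    omega
  rw [this, Finset.card_singleton]

/-- A deviating agent raises the load of the resources it joins, except for those with `j = n`,
which it already selects in the equilibrium. -/
lemma load_update {n r : ℕ} (i : Fin n) (hr : r ∈ altAct n i) :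
    load (Function.update (eqAct n) i (altAct n i)) r = if r / n < n then r / n + 1 else n := by
  have hR : r ∈ range ((n + 1) * n) := (Finset.mem_filter.1 hr).1
  have hd : (i + r % n) % n = n - 1 := (Finset.mem_filter.1 hr).2
  have hr' := Finset.mem_range.1 hR
  have hle : r / n ≤ n := Nat.lt_succ_iff.1 (Nat.div_lt_of_lt_mul (by rwa [mul_comm] at hr'))
  have hn : 0 < n := i.pos
  have key : (univ.filter fun k : Fin n => r ∈ Function.update (eqAct n) i (altAct n i) k) =
      insert i (univ.filter fun k : Fin n => r ∈ eqAct n k) := by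
    ext k
    by_cases hk : k = i
    · subst hk
      simp [hr]
    · simp [hk]
  have hl : (univ.filter fun k : Fin n => r ∈ eqAct n k).card = r / n := load_eqAct hR
  have hmem : i ∈ (univ.filter fun k : Fin n => r ∈ eqAct n k) ↔ n - 1 < r / n := by
    rw [Finset.mem_filter, eqAct, Finset.mem_filter, hd]
    simp [hr']
  rw [load, key]
  split_ifs with h
  · rw [Finset.card_insert_of_notMem (by rw [hmem]; omega), hl]
  · rw [Finset.insert_eq_of_mem (by rw [hmem]; omega), hl]
    omega

/-! ### Utilities and the equilibrium condition -/

lemma util_eqAct (n : ℕ) (hn : 2 ≤ n) (δ : ℝ) (hδ0 : 0 ≤ δ) (hδ1 : δ < 1) (u : ℕ → ℝ)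
    (i : Fin n) :
    util (cyclicGame n hn δ hδ0 hδ1) u i (eqAct n) =
      ∑ j ∈ range (n + 1), (1 + δ) * (j * (thetaVal n ((1 + δ) / (1 - δ)) j * u j)) := by
  set θ := thetaVal n ((1 + δ) / (1 - δ)) with hθ
  have h1 : util (cyclicGame n hn δ hδ0 hδ1) u i (eqAct n) =
      ∑ r ∈ range ((n + 1) * n), (fun j c => if (i + c) % n < j then
        (1 + δ) * (θ j * u j) else 0) (r / n) (r % n) := by
    rw [util]
    conv_lhs => rw [eqAct]
    rw [Finset.sum_filter]
    refine Finset.sum_congr rfl fun r hr => ?_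
    rw [load_eqAct hr]
    simp only [cyclicGame]
    split_ifs
    · rw [hθ]; ring
    · rfl
  refine h1.trans ((sum_range_mul_divMod n (by omega) (n + 1) (fun j c =>
    if (i + c) % n < j then (1 + δ) * (θ j * u j) else 0)).trans ?_)
  refine Finset.sum_congr rfl fun j hj => ?_
  have hj' := Finset.mem_range.1 hj
  rw [sum_range_add_mod n (fun d => if d < j then (1 + δ) * (θ j * u j) else 0),
    ← Finset.sum_filter]
  have : ((range n).filter fun d => d < j) = range j := by
    ext d
    simp only [Finset.mem_filter, Finset.mem_range]
    omega
  rw [this, Finset.sum_const, Finset.card_range, nsmul_eq_mul]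
  ring

lemma util_update (n : ℕ) (hn : 2 ≤ n) (δ : ℝ) (hδ0 : 0 ≤ δ) (hδ1 : δ < 1) (u : ℕ → ℝ)
    (i : Fin n) :
    util (cyclicGame n hn δ hδ0 hδ1) u i (Function.update (eqAct n) i (altAct n i)) =
      (∑ j ∈ range n, (1 - δ) * (thetaVal n ((1 + δ) / (1 - δ)) j * u (j + 1))) +
        (1 + δ) * (thetaVal n ((1 + δ) / (1 - δ)) n * u n) := by
  set θ := thetaVal n ((1 + δ) / (1 - δ)) with hθ
  have h1 : util (cyclicGame n hn δ hδ0 hδ1) u i (Function.update (eqAct n) i (altAct n i)) =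
      ∑ r ∈ range ((n + 1) * n), (fun j c => if (i + c) % n = n - 1 then
        (if j < n then (1 - δ) * (θ j * u (j + 1)) else (1 + δ) * (θ j * u n)) else 0)
          (r / n) (r % n) := by
    rw [util, Function.update_self]
    rw [← Finset.sum_filter (s := range ((n + 1) * n)) (fun r => (i + r % n) % n = n - 1)
      (fun r => if r / n < n then (1 - δ) * (θ (r / n) * u (r / n + 1))
        else (1 + δ) * (θ (r / n) * u n))]
    refine Finset.sum_congr rfl fun r hr => ?_
    rw [load_update i hr]
    have hd : (i + r % n) % n = n - 1 := (Finset.mem_filter.1 hr).2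
    simp only [cyclicGame, hd]
    by_cases h : r / n < n
    · rw [if_pos h, if_pos h, if_neg (by omega), hθ]
      ring
    · rw [if_neg h, if_neg h, if_pos (by omega), hθ]
      ring
  refine h1.trans ((sum_range_mul_divMod n (by omega) (n + 1) (fun j c =>
    if (i + c) % n = n - 1 then
      (if j < n then (1 - δ) * (θ j * u (j + 1)) else (1 + δ) * (θ j * u n)) else 0)).trans ?_)
  have h2 : ∀ j ∈ range (n + 1), (∑ c ∈ range n, if (i + c) % n = n - 1 then
        (if j < n then (1 - δ) * (θ j * u (j + 1)) else (1 + δ) * (θ j * u n)) else 0) =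
      if j < n then (1 - δ) * (θ j * u (j + 1)) else (1 + δ) * (θ j * u n) := by
    intro j _
    rw [sum_range_add_mod n (fun d => if d = n - 1 then
      (if j < n then (1 - δ) * (θ j * u (j + 1)) else (1 + δ) * (θ j * u n)) else 0),
      Finset.sum_ite_eq', if_pos (Finset.mem_range.2 (by omega))]
  rw [Finset.sum_congr rfl h2, Finset.sum_range_succ, if_neg (lt_irrefl n)]
  congr 1
  exact Finset.sum_congr rfl fun j hj => if_pos (Finset.mem_range.1 hj)

lemma eqAct_isEquilibrium (n : ℕ) (hn : 2 ≤ n) (δ : ℝ) (hδ0 : 0 ≤ δ) (hδ1 : δ < 1)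
    (u : ℕ → ℝ) : IsEquilibrium (cyclicGame n hn δ hδ0 hδ1) u (eqAct n) := by
  refine ⟨fun i => by simp [cyclicGame], fun i s hs => ?_⟩
  rcases Finset.mem_insert.1 hs with rfl | hs
  · rw [Function.update_eq_self]
  · rw [Finset.mem_singleton.1 hs, util_update, util_eqAct, sum_thetaVal_balance hn hδ0 hδ1]

lemma altAct_admissible (n : ℕ) (hn : 2 ≤ n) (δ : ℝ) (hδ0 : 0 ≤ δ) (hδ1 : δ < 1) :
    Admissible (cyclicGame n hn δ hδ0 hδ1) (altAct n) := fun i => by simp [cyclicGame]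

/-! ### Welfare and the price of anarchy -/

lemma welfare_altAct (n : ℕ) (hn : 2 ≤ n) (δ : ℝ) (hδ0 : 0 ≤ δ) (hδ1 : δ < 1) :
    welfare (cyclicGame n hn δ hδ0 hδ1) wsc (cyclicGame n hn δ hδ0 hδ1).ytrue (altAct n) =
      n * ∑ j ∈ range (n + 1), thetaVal n ((1 + δ) / (1 - δ)) j := by
  have h1 : welfare (cyclicGame n hn δ hδ0 hδ1) wsc (cyclicGame n hn δ hδ0 hδ1).ytrue (altAct n) =
      ∑ r ∈ range ((n + 1) * n), (fun j _ => thetaVal n ((1 + δ) / (1 - δ)) j) (r / n) (r % n) := by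
    refine Finset.sum_congr rfl fun r hr => ?_
    rw [load_altAct (by omega) hr]
    simp [cyclicGame, wsc]
  refine h1.trans ((sum_range_mul_divMod n (by omega) (n + 1)
    (fun j _ => thetaVal n ((1 + δ) / (1 - δ)) j)).trans ?_)
  rw [Finset.mul_sum]
  simp

lemma welfare_eqAct (n : ℕ) (hn : 2 ≤ n) (δ : ℝ) (hδ0 : 0 ≤ δ) (hδ1 : δ < 1) :
    welfare (cyclicGame n hn δ hδ0 hδ1) wsc (cyclicGame n hn δ hδ0 hδ1).ytrue (eqAct n) =
      n * (∑ j ∈ range (n + 1), thetaVal n ((1 + δ) / (1 - δ)) j - 1) := by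
  have h1 : welfare (cyclicGame n hn δ hδ0 hδ1) wsc (cyclicGame n hn δ hδ0 hδ1).ytrue (eqAct n) =
      ∑ r ∈ range ((n + 1) * n),
        (fun j _ => thetaVal n ((1 + δ) / (1 - δ)) j * wsc j) (r / n) (r % n) := by
    refine Finset.sum_congr rfl fun r hr => ?_
    rw [load_eqAct hr]
    simp [cyclicGame]
  have h0 : thetaVal n ((1 + δ) / (1 - δ)) 0 = 1 := by
    rw [thetaVal, if_pos (by omega)]
    simp
  refine h1.trans ((sum_range_mul_divMod n (by omega) (n + 1)
    (fun j _ => thetaVal n ((1 + δ) / (1 - δ)) j * wsc j)).trans ?_)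
  rw [Finset.sum_range_succ', Finset.sum_range_succ',
    h0, add_sub_cancel_right, Finset.mul_sum]
  simp [wsc]

lemma welfare_wsc_nonneg {n : ℕ} (G : ResourceGame n) (a : Fin n → Finset ℕ) :
    0 ≤ welfare G wsc G.ytrue a := by
  refine Finset.sum_nonneg fun r hr => mul_nonneg (G.ytrue_pos r hr).le ?_
  unfold wsc
  split_ifs <;> norm_num

lemma optWelfare_wsc_nonneg {n : ℕ} (G : ResourceGame n) : 0 ≤ optWelfare G wsc := by
  refine Real.sSup_nonneg ?_
  rintro x ⟨a, _, rfl⟩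
  exact welfare_wsc_nonneg G a

lemma welfare_le_optWelfare {n : ℕ} (G : ResourceGame n) {a : Fin n → Finset ℕ}
    (ha : Admissible G a) : welfare G wsc G.ytrue a ≤ optWelfare G wsc := by
  refine le_csSup ⟨∑ r ∈ G.R, G.ytrue r, ?_⟩ ⟨a, ha, rfl⟩
  rintro x ⟨b, _, rfl⟩
  refine Finset.sum_le_sum fun r hr => mul_le_of_le_one_right (G.ytrue_pos r hr).le ?_
  unfold wsc
  split_ifs <;> norm_num

lemma PoA_wsc_le {n : ℕ} (hn : 1 ≤ n) {u : ℕ → ℝ} {δ : ℝ} (G : ResourceGame n)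
    (hG : Uncertain G δ) {a a' : Fin n → Finset ℕ} (ha : IsEquilibrium G u a)
    (ha' : Admissible G a') (hpos : 0 < welfare G wsc G.ytrue a') :
    PoA wsc u δ n ≤ welfare G wsc G.ytrue a / welfare G wsc G.ytrue a' := by
  refine le_trans (csInf_le ⟨0, ?_⟩ ⟨n, hn, le_rfl, G, hG, a, ha, rfl⟩)
    (div_le_div_of_nonneg_left (welfare_wsc_nonneg G a) hpos (welfare_le_optWelfare G ha'))
  rintro q ⟨m, _, _, H, _, b, _, rfl⟩
  exact div_nonneg (welfare_wsc_nonneg H b) (optWelfare_wsc_nonneg H)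

/-- for `n ≥ 2`, `δ ∈ [0,1)`, `B = (1+δ)/(1−δ)` and any utility basis `u`
with `u(0)=0, u(1)=1`, there is a set covering game with `n` agents, uncertainty at most
`δ`, an equilibrium `a` and a joint action `a'` with
`W(a; y_true) = [1 − 1/(1/(B^n(n−1)(n−1)!) + Σ_{k=0}^{n−1} B^{−k}/k!)]·W(a'; y_true)`;
in particular `PoA(Γ^δ_{w_sc,u,n})` is at most this quantity. -/
theorem setCovering_worst_case (n : ℕ) (hn : 2 ≤ n) (δ : ℝ) (hδ0 : 0 ≤ δ) (hδ1 : δ < 1)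
    (B : ℝ) (hB : B = (1 + δ) / (1 - δ))
    (u : ℕ → ℝ) (hu0 : u 0 = 0) (hu1 : u 1 = 1)
    (P : ℝ)
    (hP : P = 1 - 1 / (1 / (B ^ n * ((n : ℝ) - 1) * (Nat.factorial (n - 1) : ℝ)) +
      ∑ k ∈ Finset.range n, (B ^ k)⁻¹ / (Nat.factorial k : ℝ))) :
    (∃ G : ResourceGame n, Uncertain G δ ∧
      ∃ a a' : Fin n → Finset ℕ, IsEquilibrium G u a ∧ Admissible G a' ∧
        welfare G wsc G.ytrue a = P * welfare G wsc G.ytrue a') ∧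
    PoA wsc u δ n ≤ P := by
  subst hB
  set D := ∑ j ∈ range (n + 1), thetaVal n ((1 + δ) / (1 - δ)) j with hD
  have hDpos : 0 < D := Finset.sum_pos
    (fun j _ => thetaVal_pos hn (div_pos (by linarith) (by linarith)) j) ⟨0, by simp⟩
  have hPD : P = 1 - 1 / D := by
    rw [hP, hD, Finset.sum_range_succ, add_comm]
    congr 3
    · refine Finset.sum_congr rfl fun j hj => ?_
      rw [thetaVal, if_pos (Finset.mem_range.1 hj)]
    · rw [thetaVal, if_neg (lt_irrefl n)]
  have hn0 : (0 : ℝ) < n := by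
    have : 0 < n := by omega
    exact_mod_cast this
  have hW := welfare_eqAct n hn δ hδ0 hδ1
  have hW' := welfare_altAct n hn δ hδ0 hδ1
  rw [← hD] at hW hW'
  have hpos : 0 < welfare (cyclicGame n hn δ hδ0 hδ1) wsc
      (cyclicGame n hn δ hδ0 hδ1).ytrue (altAct n) := by
    rw [hW']
    positivity
  have heq : welfare (cyclicGame n hn δ hδ0 hδ1) wsc (cyclicGame n hn δ hδ0 hδ1).ytrue (eqAct n) =
      P * welfare (cyclicGame n hn δ hδ0 hδ1) wsc
        (cyclicGame n hn δ hδ0 hδ1).ytrue (altAct n) := by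
    rw [hW, hW', hPD]
    field_simp
  have hG := cyclicGame_uncertain n hn δ hδ0 hδ1
  have hE := eqAct_isEquilibrium n hn δ hδ0 hδ1 u
  have hA := altAct_admissible n hn δ hδ0 hδ1
  refine ⟨⟨_, hG, _, _, hE, hA, heq⟩, ?_⟩
  refine (PoA_wsc_le (by omega) _ hG hE hA hpos).trans_eq ?_
  rw [heq, mul_div_assoc, div_self hpos.ne', mul_one]
end

section
/- Let δ ∈ [0,1) and B = (1+δ)/(1−δ). Then u*_δ(1) = 1, and for every integer j ≥ 1, B·j·u*_δ(j) − u*_δ(j+1) + 1 = (1 − e^{−1/B})^{−1}. -/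
open Finset Filter

/-- The optimal utility design for set covering games with uncertainty `δ`:
`u*_δ(0) = 0` and `u*_δ(j) = Σ_{k=j}^∞ (j−1)! / (B^{k−j+1}·(e^{1/B}−1)·k!)` for `j ≥ 1`,
where `B = (1+δ)/(1−δ)`. -/
noncomputable def uStar (δ : ℝ) : ℕ → ℝ := fun j =>
  if j = 0 then 0 else
    ∑' k : ℕ, if j ≤ k then
      (Nat.factorial (j - 1) : ℝ) /
        (((1 + δ) / (1 - δ)) ^ (k - j + 1) * (Real.exp (1 / ((1 + δ) / (1 - δ))) - 1) *
          (Nat.factorial k : ℝ))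
    else 0

/-!
Up to the factor `j! B ^ j / (exp (1 / B) - 1)`, the value `u*(j + 1)` is the tail from index
`j + 1` on of the exponential series at `1 / B`, i.e. `exp (1 / B)` minus a partial sum
(`uStar_succ`). In `B * j * u*(j) - u*(j + 1)` the two prefactors agree, so only the term of
index `j` of the series survives, and it contributes `1 / (exp (1 / B) - 1)`.
-/

theorem hasSum_exp_tail (x : ℝ) (j : ℕ) :
    HasSum (fun k : ℕ => if j ≤ k then x ^ k / (Nat.factorial k : ℝ) else 0)
      (Real.exp x - ∑ i ∈ range j, x ^ i / (Nat.factorial i : ℝ)) := by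
  have h1 : HasSum (fun k : ℕ => x ^ k / (Nat.factorial k : ℝ)) (Real.exp x) := by
    rw [Real.exp_eq_exp_ℝ]
    exact NormedSpace.expSeries_div_hasSum_exp x
  have h2 : HasSum (fun k : ℕ => if k ∈ range j then x ^ k / (Nat.factorial k : ℝ) else 0)
      (∑ i ∈ range j, x ^ i / (Nat.factorial i : ℝ)) := by
    rw [← sum_congr rfl fun i hi => if_pos hi]
    exact hasSum_sum_of_ne_finset_zero fun k hk => if_neg hk
  refine (h1.sub h2).congr_fun fun k => ?_
  by_cases h : j ≤ k
  · simp [h, not_lt.mpr h]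
  · simp [h, not_le.mp h]

theorem uStar_succ (δ B : ℝ) (hB : B = (1 + δ) / (1 - δ)) (hB0 : B ≠ 0) (j : ℕ) :
    uStar δ (j + 1) = (Nat.factorial j : ℝ) * B ^ j / (Real.exp (1 / B) - 1) *
      (Real.exp (1 / B) - ∑ i ∈ range (j + 1), (1 / B) ^ i / (Nat.factorial i : ℝ)) := by
  rw [uStar, if_neg (Nat.succ_ne_zero j), ← hB,
    ← ((hasSum_exp_tail (1 / B) (j + 1)).mul_left _).tsum_eq]
  refine tsum_congr fun k => ?_
  split_ifs with h
  · obtain ⟨m, rfl⟩ := Nat.exists_eq_add_of_le h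
    have e : j + 1 + m - (j + 1) + 1 = m + 1 := by omega
    have e' : B ^ j * (1 / B) ^ (j + 1 + m) = (B ^ (m + 1))⁻¹ := by
      rw [one_div, inv_pow, show j + 1 + m = j + (m + 1) by omega, pow_add B j]
      field_simp
    rw [e, Nat.add_sub_cancel, div_mul_div_comm, mul_assoc (Nat.factorial j : ℝ), e',
      mul_assoc, ← div_div, div_eq_mul_inv (Nat.factorial j : ℝ)]
  · simp

theorem uStar_recursion (δ : ℝ) (hδ0 : 0 ≤ δ) (hδ1 : δ < 1)
    (B : ℝ) (hB : B = (1 + δ) / (1 - δ)) :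
    uStar δ 1 = 1 ∧
      ∀ j : ℕ, 1 ≤ j →
        B * (j : ℝ) * uStar δ j - uStar δ (j + 1) + 1 =
          (1 - Real.exp (-(1 / B)))⁻¹ := by
  have hBpos : 0 < B := by
    rw [hB]
    exact div_pos (by linarith) (by linarith)
  have hE : 0 < Real.exp (1 / B) - 1 :=
    sub_pos.mpr (Real.one_lt_exp_iff.mpr (by positivity))
  constructor
  · rw [uStar_succ δ B hB hBpos.ne' 0]
    simp only [zero_add, sum_range_one, Nat.factorial_zero, pow_zero, Nat.cast_one, div_one,
      mul_one]
    exact one_div_mul_cancel hE.ne'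
  · intro j hj
    obtain ⟨n, rfl⟩ := Nat.exists_eq_add_of_le' hj
    rw [uStar_succ δ B hB hBpos.ne' n, uStar_succ δ B hB hBpos.ne' (n + 1),
      sum_range_succ _ (n + 1), Nat.factorial_succ n, Real.exp_neg]
    generalize ∑ i ∈ range (n + 1), (1 / B) ^ i / (Nat.factorial i : ℝ) = S
    generalize Real.exp (1 / B) = e at hE ⊢
    have hf : (Nat.factorial n : ℝ) ≠ 0 := by positivity
    have hn : (n : ℝ) + 1 ≠ 0 := by positivity
    have he : e ≠ 0 := by linarith
    have hR : (1 - e⁻¹)⁻¹ = e / (e - 1) := by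
      rw [← inv_div, sub_div, div_self he, one_div]
    rw [hR, one_div, inv_pow]
    have hE' := hE.ne'
    push_cast
    field_simp
    ring
end

section
/- Let δ ∈ [0,1) and B = (1+δ)/(1−δ). Then the supremum over integers j ≥ 1 of max{ B·(j+1)·u*_δ(j+1), B·j·u*_δ(j+1) + 1, B·j·u*_δ(j) − u*_δ(j+1) + 1 } equals (1 − e^{−1/B})^{−1}. -/
/-!
Write `E = e^{1/B}` and `u = u*_δ`. Splitting off the first term of the series gives the recursion
`B·j·u(j) = 1/(E-1) + u(j+1)`, so the third entry of the maximum is the constant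
`1/(E-1) + 1 = (1 - e^{-1/B})⁻¹` for every `j ≥ 1`. By the same recursion the first entry is
at most this constant iff `u(j+2) ≤ 1`, and the second iff `u(j+2) ≤ B·u(j+1)`. Both
inequalities hold because `u` is decreasing on `j ≥ 1` (termwise comparison of the series),
`u(1) = 1` (the exponential series), and `B ≥ 1`. Hence every maximum equals the claimed value.
-/

open Finset Filter

/-- The `m`-th term of the series for `uStar δ (n + 1)`, reindexed to start at `m = 0`. -/
noncomputable def uTerm (B : ℝ) (n m : ℕ) : ℝ :=
  (Nat.factorial n : ℝ) /
    (B ^ (m + 1) * (Real.exp (1 / B) - 1) * (Nat.factorial (n + 1 + m) : ℝ))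

lemma uStar_succ_s11 (δ : ℝ) (n : ℕ) :
    uStar δ (n + 1) = ∑' m, uTerm ((1 + δ) / (1 - δ)) n m := by
  have hinj : Function.Injective (fun m : ℕ => n + 1 + m) := add_right_injective (n + 1)
  unfold uStar
  rw [if_neg (Nat.succ_ne_zero n), ← hinj.tsum_eq]
  · refine tsum_congr fun m => ?_
    have h : n + 1 + m - (n + 1) + 1 = m + 1 := by omega
    simp only [h, Nat.le_add_right, if_true, Nat.add_sub_cancel, uTerm]
  · intro k hk
    have hle : n + 1 ≤ k := by
      by_contra h
      exact hk (if_neg h)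
    exact ⟨k - (n + 1), Nat.add_sub_cancel' hle⟩

lemma uTerm_eq {B : ℝ} (hB : 0 < B) (n m : ℕ) :
    uTerm B n m = ((Nat.factorial n : ℝ) * B ^ n / (Real.exp (1 / B) - 1)) *
      ((1 / B) ^ (m + (n + 1)) / (Nat.factorial (m + (n + 1)) : ℝ)) := by
  have hE : 0 < Real.exp (1 / B) - 1 := by
    have := Real.one_lt_exp_iff.2 (one_div_pos.2 hB)
    linarith
  have hf : (0 : ℝ) < (Nat.factorial (m + (n + 1)) : ℝ) := by positivity
  unfold uTerm
  rw [add_comm (n + 1) m, one_div_pow, show m + (n + 1) = n + (m + 1) by omega, pow_add B n (m + 1)]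
  field_simp

lemma summable_uTerm {B : ℝ} (hB : 0 < B) (n : ℕ) : Summable (uTerm B n) := by
  rw [show uTerm B n = _ from funext (uTerm_eq hB n)]
  exact ((summable_nat_add_iff (n + 1)).2 (Real.summable_pow_div_factorial (1 / B))).mul_left _

/-- The recursion `B·j·u(j) = 1/(E-1) + u(j+1)` for `j = n + 1`, at the level of series. -/
lemma tsum_uTerm_rec {B : ℝ} (hB : 0 < B) (n : ℕ) :
    B * ((n : ℝ) + 1) * ∑' m, uTerm B n m =
      1 / (Real.exp (1 / B) - 1) + ∑' m, uTerm B (n + 1) m := by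
  have hE : 0 < Real.exp (1 / B) - 1 := by
    have := Real.one_lt_exp_iff.2 (one_div_pos.2 hB)
    linarith
  rw [(summable_uTerm hB n).tsum_eq_zero_add, mul_add, ← tsum_mul_left]
  congr 1
  · simp only [uTerm, add_zero, Nat.factorial_succ, zero_add, pow_one]
    push_cast
    have : (0 : ℝ) < (Nat.factorial n : ℝ) := by positivity
    field_simp
  · refine tsum_congr fun m => ?_
    unfold uTerm
    rw [show n + 1 + (m + 1) = n + 1 + 1 + m by omega, Nat.factorial_succ n]
    push_cast
    have : (0 : ℝ) < (Nat.factorial (n + 1 + 1 + m) : ℝ) := by positivity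
    field_simp
    ring

lemma tsum_uTerm_zero {B : ℝ} (hB : 0 < B) : ∑' m, uTerm B 0 m = 1 := by
  have hE : 0 < Real.exp (1 / B) - 1 := by
    have := Real.one_lt_exp_iff.2 (one_div_pos.2 hB)
    linarith
  have h1 : Real.exp (1 / B) = ∑' m : ℕ, (1 / B) ^ m / (Nat.factorial m : ℝ) := by
    rw [Real.exp_eq_exp_ℝ, NormedSpace.exp_eq_tsum_div]
  rw [(Real.summable_pow_div_factorial (1 / B)).tsum_eq_zero_add] at h1
  simp only [uTerm_eq hB, tsum_mul_left, zero_add]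
  rw [eq_sub_of_add_eq' h1.symm]
  simp only [Nat.factorial_zero, pow_zero, Nat.cast_one]
  field_simp

lemma tsum_uTerm_antitone {B : ℝ} (hB : 0 < B) : Antitone fun n => ∑' m, uTerm B n m := by
  refine antitone_nat_of_succ_le fun n => ?_
  refine (summable_uTerm hB (n + 1)).tsum_le_tsum (fun m => ?_) (summable_uTerm hB n)
  have hE : 0 < Real.exp (1 / B) - 1 := by
    have := Real.one_lt_exp_iff.2 (one_div_pos.2 hB)
    linarith
  unfold uTerm
  rw [show n + 1 + 1 + m = (n + 1 + m) + 1 by omega, Nat.factorial_succ n,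
    Nat.factorial_succ (n + 1 + m), div_le_div_iff₀ (by positivity) (by positivity)]
  push_cast
  have h : (n : ℝ) + 1 ≤ n + 1 + m + 1 := by
    have : (0 : ℝ) ≤ m := by positivity
    linarith
  have hp : 0 ≤ (Nat.factorial n : ℝ) * (B ^ (m + 1) * (Real.exp (1 / B) - 1) *
      (Nat.factorial (n + 1 + m) : ℝ)) := by positivity
  nlinarith [mul_le_mul_of_nonneg_right h hp]

/-- for `δ ∈ [0,1)` and `B = (1+δ)/(1−δ)`, the supremum over `j ≥ 1` of
`max{B(j+1)u*_δ(j+1), Bju*_δ(j+1)+1, Bju*_δ(j)−u*_δ(j+1)+1}` equals `(1 − e^{−1/B})⁻¹`. -/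
theorem uStar_sup_constraints (δ : ℝ) (hδ0 : 0 ≤ δ) (hδ1 : δ < 1)
    (B : ℝ) (hB : B = (1 + δ) / (1 - δ)) :
    sSup {x : ℝ | ∃ j : ℕ, 1 ≤ j ∧
        x = max (max (B * ((j : ℝ) + 1) * uStar δ (j + 1))
            (B * (j : ℝ) * uStar δ (j + 1) + 1))
          (B * (j : ℝ) * uStar δ j - uStar δ (j + 1) + 1)} =
      (1 - Real.exp (-(1 / B)))⁻¹ := by
  have hB1 : 1 ≤ B := by
    rw [hB, le_div_iff₀ (by linarith)]
    linarith
  have hB0 : 0 < B := by linarith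
  have hE : 0 < Real.exp (1 / B) - 1 := by
    have := Real.one_lt_exp_iff.2 (one_div_pos.2 hB0)
    linarith
  have hC : (1 - Real.exp (-(1 / B)))⁻¹ = 1 / (Real.exp (1 / B) - 1) + 1 := by
    have hne : 1 - (Real.exp (1 / B))⁻¹ ≠ 0 := by
      have : (Real.exp (1 / B))⁻¹ < 1 := inv_lt_one_of_one_lt₀ (by linarith)
      linarith
    rw [Real.exp_neg, inv_eq_iff_eq_inv]
    field_simp
    ring
  have hu : ∀ n, uStar δ (n + 1) = ∑' m, uTerm B n m := fun n => hB ▸ uStar_succ_s11 δ n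
  have hrec : ∀ n : ℕ, B * ((n : ℝ) + 1) * uStar δ (n + 1) =
      1 / (Real.exp (1 / B) - 1) + uStar δ (n + 1 + 1) := fun n => by
    rw [hu, hu, tsum_uTerm_rec hB0]
  have hanti : ∀ n, uStar δ (n + 1 + 1) ≤ uStar δ (n + 1) := fun n => by
    rw [hu, hu]
    exact tsum_uTerm_antitone hB0 n.le_succ
  have hle : ∀ n, uStar δ (n + 1) ≤ 1 := fun n => by
    rw [hu, ← tsum_uTerm_zero hB0]
    exact tsum_uTerm_antitone hB0 n.zero_le
  have hnn : ∀ n, 0 ≤ uStar δ (n + 1) := fun n => by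
    rw [hu]
    exact tsum_nonneg fun m => by unfold uTerm; positivity
  have key : ∀ j : ℕ, 1 ≤ j → max (max (B * ((j : ℝ) + 1) * uStar δ (j + 1))
      (B * (j : ℝ) * uStar δ (j + 1) + 1)) (B * (j : ℝ) * uStar δ j - uStar δ (j + 1) + 1) =
      (1 - Real.exp (-(1 / B)))⁻¹ := by
    intro j hj
    obtain ⟨n, rfl⟩ := Nat.exists_eq_add_of_le' hj
    have h3 : B * ((n + 1 : ℕ) : ℝ) * uStar δ (n + 1) - uStar δ (n + 1 + 1) + 1 =
        (1 - Real.exp (-(1 / B)))⁻¹ := by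
      rw [hC]
      push_cast
      linarith [hrec n]
    rw [h3]
    refine max_eq_right (max_le ?_ ?_)
    · rw [hrec, hC]
      linarith [hle (n + 1 + 1)]
    · have h2 := hrec (n + 1)
      have h4 := hanti (n + 1)
      have h5 : 1 * uStar δ (n + 1 + 1) ≤ B * uStar δ (n + 1 + 1) :=
        mul_le_mul_of_nonneg_right hB1 (hnn (n + 1))
      rw [hC]
      linarith
  have hset : {x : ℝ | ∃ j : ℕ, 1 ≤ j ∧
      x = max (max (B * ((j : ℝ) + 1) * uStar δ (j + 1))
          (B * (j : ℝ) * uStar δ (j + 1) + 1))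
        (B * (j : ℝ) * uStar δ j - uStar δ (j + 1) + 1)} =
      {(1 - Real.exp (-(1 / B)))⁻¹} := by
    ext x
    constructor
    · rintro ⟨j, hj, rfl⟩
      exact key j hj
    · rintro rfl
      exact ⟨1, le_rfl, (key 1 le_rfl).symm⟩
  rw [hset, csSup_singleton]
end

section
/- Let n ≥ 2 be an integer and B ≥ 1 a real number. Then the closed-form sequence u_{n,B} satisfies: u_{n,B}(1) = 1; B·(n−1)·u_{n,B}(n) + 1 = X_n(B); and B·j·u_{n,B}(j) − u_{n,B}(j+1) + 1 = X_n(B) for every j ∈ {1,…,n−1}, where X_n(B) = [1 − 1/(1/(B^n·(n−1)·(n−1)!) + Σ_{k=0}^{n−1} B^{−k}/k!)]^{−1}. -/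
/-! Write `D` for the common denominator of the `uNB n B j`. Since `X = (1 - 1 / (D + 1))⁻¹`, one has
`X = 1 / D + 1`, so both equations assert that their left side, without the `+ 1`, equals `1 / D`.
With `S j` the sum of `B ^ (-k) / k!` over `k ∈ [j, n)`, the factor `B * j` turns the prefactor `B ^ (j - 1) * (j - 1)!`
into `B ^ j * j!`, the prefactor of `uNB n B (j + 1)`; the difference then telescopes to
`B ^ j * j! * (S j - S (j + 1)) / D = 1 / D`. At `j = n` the sum is empty, and the extra term
`1 / (B ^ n * (n - 1) * (n - 1)!)` is exactly what makes the boundary equation hold. -/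

open Finset Filter

/-- The closed-form optimal utility design for set covering games with `n` agents:
`u_{n,B}(j) = B^{j−1}·(j−1)!·(1/(B^n·(n−1)·(n−1)!) + Σ_{k=j}^{n−1} B^{−k}/k!) / D_n(B)`
where `D_n(B) = 1/(B^n·(n−1)·(n−1)!) + Σ_{k=1}^{n−1} B^{−k}/k!`. -/
noncomputable def uNB (n : ℕ) (B : ℝ) (j : ℕ) : ℝ :=
  (B ^ (j - 1) * (Nat.factorial (j - 1) : ℝ) *
      (1 / (B ^ n * ((n : ℝ) - 1) * (Nat.factorial (n - 1) : ℝ)) +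
        ∑ k ∈ Finset.Ico j n, (B ^ k)⁻¹ / (Nat.factorial k : ℝ))) /
    (1 / (B ^ n * ((n : ℝ) - 1) * (Nat.factorial (n - 1) : ℝ)) +
      ∑ k ∈ Finset.Ico 1 n, (B ^ k)⁻¹ / (Nat.factorial k : ℝ))

/-- for `n ≥ 2` and `B ≥ 1`, the closed-form sequence `u_{n,B}` satisfies
`u_{n,B}(1) = 1`, `B(n−1)u_{n,B}(n) + 1 = X_n(B)` and
`Bju_{n,B}(j) − u_{n,B}(j+1) + 1 = X_n(B)` for `j ∈ {1,…,n−1}`, where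
`X_n(B) = [1 − 1/(1/(B^n(n−1)(n−1)!) + Σ_{k=0}^{n−1} B^{−k}/k!)]⁻¹`. -/
theorem uNB_recursion (n : ℕ) (hn : 2 ≤ n) (B : ℝ) (hB : 1 ≤ B)
    (X : ℝ)
    (hX : X = (1 - 1 / (1 / (B ^ n * ((n : ℝ) - 1) * (Nat.factorial (n - 1) : ℝ)) +
      ∑ k ∈ Finset.range n, (B ^ k)⁻¹ / (Nat.factorial k : ℝ)))⁻¹) :
    uNB n B 1 = 1 ∧
      B * ((n : ℝ) - 1) * uNB n B n + 1 = X ∧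
      ∀ j ∈ Finset.Icc 1 (n - 1),
        B * (j : ℝ) * uNB n B j - uNB n B (j + 1) + 1 = X := by
  have hB0 : 0 < B := by linarith
  have hn1 : (0 : ℝ) < (n : ℝ) - 1 := by
    have : (2 : ℝ) ≤ n := by exact_mod_cast hn
    linarith
  have hf : (0 : ℝ) < (Nat.factorial (n - 1) : ℝ) := by positivity
  have hc : 0 < 1 / (B ^ n * ((n : ℝ) - 1) * (Nat.factorial (n - 1) : ℝ)) := by positivity
  have hS : 0 ≤ ∑ k ∈ Finset.Ico 1 n, (B ^ k)⁻¹ / (Nat.factorial k : ℝ) :=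
    Finset.sum_nonneg fun k _ => by positivity
  -- The `k = 0` term of the sum in `X` contributes the `1` in `D + 1`.
  have hr : ∑ k ∈ Finset.range n, (B ^ k)⁻¹ / (Nat.factorial k : ℝ) =
      1 + ∑ k ∈ Finset.Ico 1 n, (B ^ k)⁻¹ / (Nat.factorial k : ℝ) := by
    rw [Finset.range_eq_Ico, Finset.sum_eq_sum_Ico_succ_bot (by omega)]
    simp
  rw [hr] at hX
  unfold uNB
  obtain ⟨D, hD⟩ : ∃ D, D = 1 / (B ^ n * ((n : ℝ) - 1) * (Nat.factorial (n - 1) : ℝ)) +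
      ∑ k ∈ Finset.Ico 1 n, (B ^ k)⁻¹ / (Nat.factorial k : ℝ) := ⟨_, rfl⟩
  have hD0 : 0 < D := by rw [hD]; linarith
  have hX' : X = 1 / D + 1 := by
    rw [hX, add_left_comm, ← hD, one_sub_div (by positivity), inv_div, add_sub_cancel_left]
    field_simp
  rw [hX', ← hD]
  refine ⟨?_, ?_, fun j hj => ?_⟩
  · simp [hD0.ne']
  · have hp : B ^ n = B ^ (n - 1) * B := by rw [← pow_succ, Nat.sub_add_cancel (by omega)]
    rw [Finset.Ico_self, Finset.sum_empty, hp]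
    field_simp
    simp
  · rw [Finset.mem_Icc] at hj
    obtain ⟨i, rfl⟩ : ∃ i, j = i + 1 := ⟨j - 1, by omega⟩
    rw [Finset.sum_eq_sum_Ico_succ_bot (show i + 1 < n by omega)]
    simp only [Nat.add_sub_cancel]
    rw [Nat.factorial_succ]
    generalize ∑ k ∈ Finset.Ico (i + 1 + 1) n, (B ^ k)⁻¹ / (Nat.factorial k : ℝ) = T
    generalize 1 / (B ^ n * ((n : ℝ) - 1) * (Nat.factorial (n - 1) : ℝ)) = c
    have hi : (0 : ℝ) < (Nat.factorial i : ℝ) := by positivity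
    push_cast
    field_simp
    ring
end

section
/- Let n ≥ 2 be an integer and B ≥ 1 a real number. Then the closed-form sequence u_{n,B} satisfies u_{n,B}(j) ≤ 1/j for every j ∈ {1,…,n−1}, and u_{n,B} is nonincreasing on {1,…,n}, i.e., u_{n,B}(j+1) ≤ u_{n,B}(j) for every j ∈ {1,…,n−1}. -/
/-!
Write `u(j) = v(j) / D`, where `v(j)` is the numerator, so that `v(1) = D`. Splitting off the first
term of the sum gives the backward recurrence `B j v(j) = 1 + v(j+1)` for `1 ≤ j ≤ n-1`, with
terminal value `B (n-1) v(n) = 1`. Both claims follow from the single estimate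
`(B j - 1) v(j) ≤ 1` for `1 ≤ j ≤ n-1`, proved by downward induction on `j`
(`mul_numerator_le_one`): by the recurrence it says exactly that `v(j+1) ≤ v(j)`, and at index
`j+1` that `(j+1) v(j+1) ≤ j v(j)`. Hence `j v(j) ≤ v(1) = D`, which is `u(j) ≤ 1/j`.
-/

open Finset Filter

/-- The numerator `v(j)` of `uNB n B j`. -/
noncomputable def numeratorNB (n : ℕ) (B : ℝ) (j : ℕ) : ℝ :=
  B ^ (j - 1) * (Nat.factorial (j - 1) : ℝ) *
      (1 / (B ^ n * ((n : ℝ) - 1) * (Nat.factorial (n - 1) : ℝ)) +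
        ∑ k ∈ Finset.Ico j n, (B ^ k)⁻¹ / (Nat.factorial k : ℝ))

lemma uNB_eq_div (n : ℕ) (B : ℝ) (j : ℕ) :
    uNB n B j = numeratorNB n B j / numeratorNB n B 1 := by
  simp [uNB, numeratorNB]

lemma numeratorNB_pos {n : ℕ} (hn : 2 ≤ n) {B : ℝ} (hB : 1 ≤ B) (j : ℕ) :
    0 < numeratorNB n B j := by
  have h1 : (0 : ℝ) < (n : ℝ) - 1 := by
    have : (2 : ℝ) ≤ n := by exact_mod_cast hn
    linarith
  have h2 : (0 : ℝ) < B := by linarith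
  unfold numeratorNB
  positivity

lemma numeratorNB_rec {n : ℕ} {B : ℝ} (hB : 1 ≤ B) {j : ℕ} (hj : 1 ≤ j) (hjn : j < n) :
    B * j * numeratorNB n B j = 1 + numeratorNB n B (j + 1) := by
  obtain ⟨i, rfl⟩ : ∃ i, j = i + 1 := ⟨j - 1, by omega⟩
  have h2 : B ≠ 0 := by linarith
  unfold numeratorNB
  rw [Finset.sum_eq_sum_Ico_succ_bot hjn]
  generalize 1 / (B ^ n * ((n : ℝ) - 1) * (Nat.factorial (n - 1) : ℝ)) = c
  generalize ∑ k ∈ Finset.Ico (i + 1 + 1) n, (B ^ k)⁻¹ / (Nat.factorial k : ℝ) = S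
  have h3 : (Nat.factorial i : ℝ) ≠ 0 := by positivity
  have h4 : ((i : ℝ) + 1) ≠ 0 := by positivity
  simp only [Nat.add_sub_cancel, Nat.factorial_succ]
  push_cast
  field_simp
  ring

lemma numeratorNB_last {n : ℕ} (hn : 2 ≤ n) {B : ℝ} (hB : 1 ≤ B) :
    B * ((n : ℝ) - 1) * numeratorNB n B n = 1 := by
  obtain ⟨i, rfl⟩ : ∃ i, n = i + 2 := ⟨n - 2, by omega⟩
  have h2 : B ≠ 0 := by linarith
  have h3 : (Nat.factorial (i + 1) : ℝ) ≠ 0 := by positivity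
  have h4 : ((i + 2 : ℕ) : ℝ) - 1 ≠ 0 := by
    push_cast
    have : (0 : ℝ) ≤ i := by positivity
    linarith
  simp only [numeratorNB, Finset.Ico_self, Finset.sum_empty, add_zero,
    show i + 2 - 1 = i + 1 by omega]
  field_simp
  ring

/-- The estimate carrying both bounds. It is restricted to `j ≤ n - 1`: for `B > 1` it fails
at `j = n`, so the downward induction starts at `n - 1`. -/
lemma mul_numerator_le_one {n : ℕ} (hn : 2 ≤ n) {B : ℝ} (hB : 1 ≤ B) {j : ℕ} (hj : 1 ≤ j)
    (hjn : j ≤ n - 1) : (B * j - 1) * numeratorNB n B j ≤ 1 := by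
  induction hjn using Nat.decreasingInduction with
  | self =>
    have hrec := numeratorNB_rec (n := n) hB hj (by omega)
    have hlast := numeratorNB_last hn hB
    rw [Nat.sub_add_cancel (by omega)] at hrec
    rw [Nat.cast_sub (by omega), Nat.cast_one] at hrec ⊢
    have hv := numeratorNB_pos hn hB n
    have hx : 0 < B * ((n : ℝ) - 1) := by
      by_contra! h
      nlinarith
    -- With `x = B (n-1)`, the left side is `(x - 1)(1/x + 1/x²) = 1 - 1/x²`.
    have key : (B * ((n : ℝ) - 1) - 1) * numeratorNB n B (n - 1)
        = 1 - numeratorNB n B n ^ 2 := by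
      apply mul_left_cancel₀ hx.ne'
      linear_combination (B * ((n : ℝ) - 1) - 1) * hrec + (1 + numeratorNB n B n) * hlast
    nlinarith [sq_nonneg (numeratorNB n B n)]
  | of_succ k hk ih =>
    have ih := ih (by omega)
    have hrec := numeratorNB_rec (n := n) hB hj (by omega)
    have hv := numeratorNB_pos hn hB k
    have hw := numeratorNB_pos hn hB (k + 1)
    push_cast at ih
    have hk1 : (1 : ℝ) ≤ k := by exact_mod_cast hj
    have hx : 1 ≤ B * (k : ℝ) := by nlinarith
    generalize numeratorNB n B (k + 1) = w at *
    generalize numeratorNB n B k = v at *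
    -- The hypothesis `B ≥ 1` enters through `B (k+1) - 1 ≥ B k`.
    have hw' : (B * k) * w ≤ 1 := by nlinarith
    -- With `x = B k`, the bounds `x w ≤ 1 ≤ 1 + w = x v` give `w ≤ v`.
    have hwv : w ≤ v := by nlinarith
    linarith

/-- for `n ≥ 2` and `B ≥ 1`, `u_{n,B}(j) ≤ 1/j` for `j ∈ {1,…,n−1}` and
`u_{n,B}` is nonincreasing on `{1,…,n}`. -/
theorem uNB_bounds (n : ℕ) (hn : 2 ≤ n) (B : ℝ) (hB : 1 ≤ B) :
    (∀ j ∈ Finset.Icc 1 (n - 1), uNB n B j ≤ 1 / (j : ℝ)) ∧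
      ∀ j ∈ Finset.Icc 1 (n - 1), uNB n B (j + 1) ≤ uNB n B j := by
  have hD := numeratorNB_pos hn hB 1
  simp only [uNB_eq_div, Finset.mem_Icc]
  constructor
  · rintro j ⟨hj, hjn⟩
    have hj0 : (0 : ℝ) < j := by exact_mod_cast hj
    rw [div_le_div_iff₀ hD hj0, one_mul]
    -- The sequence `j v(j)` is nonincreasing on `{1, …, n-1}`.
    induction j, hj using Nat.le_induction with
    | base => simp
    | succ k hk ih =>
      have hk0 : (0 : ℝ) < k := by exact_mod_cast hk
      have ih := ih (by omega) hk0
      have hrec := numeratorNB_rec (n := n) hB hk (by omega)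
      have hP := mul_numerator_le_one hn hB (Nat.le_add_left 1 k) hjn
      push_cast at hP ⊢
      refine le_trans ?_ ih
      refine le_of_mul_le_mul_left ?_ (show 0 < B by linarith)
      linarith
  · rintro j ⟨hj, hjn⟩
    refine div_le_div_of_nonneg_right ?_ hD.le
    have hrec := numeratorNB_rec (n := n) hB hj (by omega)
    have hP := mul_numerator_le_one hn hB hj hjn
    linarith
end

section
/- Let n ≥ 2 be an integer and let 1 ≤ B ≤ B' be real numbers. Then for every j ∈ {1,…,n}, u_{n,B}(j) ≤ u_{n,B'}(j); that is, for fixed n and j the closed-form sequence u_{n,B}(j) is nondecreasing as a function of B on [1,∞). -/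
/-!
Put `x = B⁻¹` and let `c k` be the coefficient of `x ^ k` in the denominator `D_n(B)`, so that
`c k = 1 / k!` for `k < n`, `c n = 1 / ((n - 1) (n - 1)!)`, and `c k = 0` beyond. Cancelling the
powers of `B` gives
`u_{n,B}(j) = (j - 1)! * (∑ i, c (i + j) x ^ i) / (∑ i, c (i + 1) x ^ i)`,
a quotient of two polynomials in `x` (`uNB_eq`). The sequence `c` is log-concave from index `1` on:
its successive ratios are `1/2, …, 1/(n-1), 1/(n-1), 0, 0, …`. Hence the coefficient quotients
`c (i + j) / c (i + 1)` decrease with `i` (`coeff_mul_le`), and a quotient of polynomials whose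
coefficient quotients decrease is itself decreasing on `x > 0` (`sum_mul_sum_le`), that is,
increasing in `B`.
-/

open Finset Filter

/-- The coefficient of `B ^ (-k)` in `D_n(B)`, for `k ≥ 1`. The value `1 / 0!` at `k = 0` does not
occur in `D_n(B)`. -/
noncomputable def coeff (n k : ℕ) : ℝ :=
  if k < n then 1 / (Nat.factorial k : ℝ)
  else if k = n then 1 / (((n : ℝ) - 1) * (Nat.factorial (n - 1) : ℝ)) else 0

/-- The ratio `coeff n (k + 1) / coeff n k`, with value `0` from `k = n` on. -/
noncomputable def ratio (n k : ℕ) : ℝ :=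
  if k + 1 < n then 1 / ((k : ℝ) + 1) else if k + 1 = n then 1 / ((n : ℝ) - 1) else 0

lemma coeff_succ {n : ℕ} (k : ℕ) : coeff n (k + 1) = coeff n k * ratio n k := by
  unfold coeff ratio
  rcases lt_trichotomy (k + 1) n with h | h | h
  · rw [if_pos h, if_pos (by omega), if_pos h, Nat.factorial_succ]
    push_cast
    field_simp
  · subst h
    simp [mul_comm]
  · simp [show ¬ k + 1 < n by omega, show k + 1 ≠ n by omega]

lemma coeff_nonneg {n : ℕ} (hn : 2 ≤ n) (k : ℕ) : 0 ≤ coeff n k := by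
  have h : (2 : ℝ) ≤ n := by exact_mod_cast hn
  have h1 : (0 : ℝ) ≤ (n : ℝ) - 1 := by linarith
  unfold coeff
  split_ifs <;> positivity

lemma ratio_nonneg {n : ℕ} (hn : 2 ≤ n) (k : ℕ) : 0 ≤ ratio n k := by
  have h : (2 : ℝ) ≤ n := by exact_mod_cast hn
  have h1 : (0 : ℝ) ≤ (n : ℝ) - 1 := by linarith
  unfold ratio
  split_ifs <;> positivity

/-- Log-concavity of `coeff n`: the ratios decrease. The normalisation of the top coefficient makes
the last two nonzero ratios equal. -/
lemma ratio_anti {n : ℕ} (hn : 2 ≤ n) {k l : ℕ} (hkl : k ≤ l) : ratio n l ≤ ratio n k := by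
  rcases lt_trichotomy (l + 1) n with h | h | h
  · have hc : (k : ℝ) ≤ l := by exact_mod_cast hkl
    unfold ratio
    rw [if_pos h, if_pos (by omega)]
    gcongr
  · rcases hkl.eq_or_lt with rfl | hlt
    · exact le_rfl
    · have hc : (k : ℝ) + 1 + 1 ≤ n := by exact_mod_cast (by omega : k + 1 + 1 ≤ n)
      unfold ratio
      rw [if_neg (by omega), if_pos h, if_pos (by omega)]
      exact one_div_le_one_div_of_le (by positivity) (by linarith)
  · have h0 : ratio n l = 0 := by
      unfold ratio
      rw [if_neg (by omega), if_neg (by omega)]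
    exact h0 ▸ ratio_nonneg hn k

/-- The quotients `coeff n (k + m) / coeff n k` decrease with `k`, in cross-multiplied form. -/
lemma coeff_mul_le {n : ℕ} (hn : 2 ≤ n) {k l : ℕ} (hkl : k ≤ l) (m : ℕ) :
    coeff n k * coeff n (l + m) ≤ coeff n (k + m) * coeff n l := by
  induction m with
  | zero => exact le_rfl
  | succ m ih =>
    have h := mul_le_mul ih (ratio_anti hn (Nat.add_le_add_right hkl m)) (ratio_nonneg hn _)
      (mul_nonneg (coeff_nonneg hn _) (coeff_nonneg hn _))
    rw [← add_assoc, ← add_assoc, coeff_succ, coeff_succ]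
    linarith

lemma pow_mul_pow_le {x y : ℝ} (hy : 0 ≤ y) (hyx : y ≤ x) {i l : ℕ} (h : i ≤ l) :
    x ^ i * y ^ l ≤ x ^ l * y ^ i := by
  obtain ⟨d, rfl⟩ := Nat.exists_eq_add_of_le h
  have hx : 0 ≤ x := hy.trans hyx
  calc x ^ i * y ^ (i + d) = x ^ i * y ^ i * y ^ d := by ring
    _ ≤ x ^ i * y ^ i * x ^ d := by gcongr
    _ = x ^ (i + d) * y ^ i := by ring

/-- If the coefficient quotients `a i / b i` decrease (in cross-multiplied form), then the quotient
of the polynomials with coefficients `a` and `b` decreases on `[0, ∞)` (in cross-multiplied form).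
Twice the difference of the two sides is a double sum of the terms
`(a i * b l - a l * b i) * (x ^ l * y ^ i - x ^ i * y ^ l)`, both of whose factors have the sign of
`l - i`. -/
lemma sum_mul_sum_le (n : ℕ) (a b : ℕ → ℝ) (hab : ∀ i l, i ≤ l → b i * a l ≤ a i * b l)
    {x y : ℝ} (hy : 0 ≤ y) (hyx : y ≤ x) :
    (∑ i ∈ range n, a i * x ^ i) * (∑ i ∈ range n, b i * y ^ i) ≤
      (∑ i ∈ range n, a i * y ^ i) * (∑ i ∈ range n, b i * x ^ i) := by
  have key : 0 ≤ ∑ i ∈ range n, ∑ l ∈ range n,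
      (a i * b l - a l * b i) * (x ^ l * y ^ i - x ^ i * y ^ l) := by
    refine sum_nonneg fun i _ => sum_nonneg fun l _ => ?_
    rcases le_total i l with h | h
    · exact mul_nonneg (by linarith [hab i l h]) (sub_nonneg.2 (pow_mul_pow_le hy hyx h))
    · exact mul_nonneg_of_nonpos_of_nonpos (by linarith [hab l i h])
        (by linarith [pow_mul_pow_le hy hyx h])
  have expand : ∑ i ∈ range n, ∑ l ∈ range n,
      (a i * b l - a l * b i) * (x ^ l * y ^ i - x ^ i * y ^ l) =
      2 * ((∑ i ∈ range n, a i * y ^ i) * (∑ i ∈ range n, b i * x ^ i) -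
        (∑ i ∈ range n, a i * x ^ i) * (∑ i ∈ range n, b i * y ^ i)) := by
    have h1 : (∑ i ∈ range n, a i * y ^ i) * (∑ i ∈ range n, b i * x ^ i) =
        (∑ i ∈ range n, b i * x ^ i) * (∑ i ∈ range n, a i * y ^ i) := mul_comm _ _
    have h2 : (∑ i ∈ range n, a i * x ^ i) * (∑ i ∈ range n, b i * y ^ i) =
        (∑ i ∈ range n, b i * y ^ i) * (∑ i ∈ range n, a i * x ^ i) := mul_comm _ _
    -- Each product enters once in each order of summation.
    rw [two_mul]
    nth_rewrite 2 [h1, h2]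
    simp only [sum_mul_sum, ← sum_sub_distrib, ← sum_add_distrib]
    exact sum_congr rfl fun i _ => sum_congr rfl fun l _ => by ring
  linarith

/-- The tail of `D_n(B)` from index `j` on, with its lowest power of `B⁻¹` factored out. The sum on
the right may run up to `n - 1` because `coeff n` vanishes beyond `n`. -/
lemma tail_eq {n j : ℕ} (hj : j ∈ Icc 1 n) (B : ℝ) :
    1 / (B ^ n * ((n : ℝ) - 1) * (Nat.factorial (n - 1) : ℝ)) +
        ∑ k ∈ Ico j n, (B ^ k)⁻¹ / (Nat.factorial k : ℝ) =
      (B⁻¹) ^ j * ∑ i ∈ range n, coeff n (i + j) * (B⁻¹) ^ i := by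
  obtain ⟨hj1, hjn⟩ := mem_Icc.1 hj
  have hsub : ∑ i ∈ range n, coeff n (i + j) * (B⁻¹) ^ i =
      ∑ i ∈ range (n + 1 - j), coeff n (i + j) * (B⁻¹) ^ i := by
    symm
    apply sum_subset (range_subset_range.2 (by omega))
    intro i _ hi
    rw [mem_range] at hi
    unfold coeff
    rw [if_neg (by omega), if_neg (by omega), zero_mul]
  have hshift : (B⁻¹) ^ j * ∑ i ∈ range (n + 1 - j), coeff n (i + j) * (B⁻¹) ^ i =
      ∑ k ∈ Ico j (n + 1), coeff n k * (B⁻¹) ^ k := by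
    rw [sum_Ico_eq_sum_range, mul_sum]
    refine sum_congr rfl fun i _ => ?_
    rw [add_comm j i]
    ring
  rw [hsub, hshift, sum_Ico_succ_top hjn, add_comm]
  congr 1
  · refine sum_congr rfl fun k hk => ?_
    unfold coeff
    rw [if_pos (mem_Ico.1 hk).2, inv_pow]
    ring
  · unfold coeff
    rw [if_neg (lt_irrefl n), if_pos rfl, inv_pow, one_div, one_div, mul_assoc, mul_inv, mul_comm]

lemma uNB_eq {n j : ℕ} (hj : j ∈ Icc 1 n) {B : ℝ} (hB : 0 < B) :
    uNB n B j = (Nat.factorial (j - 1) : ℝ) *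
      ((∑ i ∈ range n, coeff n (i + j) * (B⁻¹) ^ i) /
        ∑ i ∈ range n, coeff n (i + 1) * (B⁻¹) ^ i) := by
  obtain ⟨hj1, hjn⟩ := mem_Icc.1 hj
  obtain ⟨m, rfl⟩ := Nat.exists_eq_add_of_le' hj1
  unfold uNB
  rw [tail_eq hj, tail_eq (mem_Icc.2 ⟨le_rfl, hj1.trans hjn⟩), pow_one, Nat.add_sub_cancel]
  have hpow : B ^ m * (B⁻¹) ^ (m + 1) = B⁻¹ := by
    rw [pow_succ, ← mul_assoc, ← mul_pow, mul_inv_cancel₀ hB.ne', one_pow, one_mul]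
  rw [mul_mul_mul_comm, hpow, mul_div_mul_left _ _ (inv_ne_zero hB.ne'), mul_div_assoc]

lemma denom_pos {n : ℕ} (hn : 2 ≤ n) {x : ℝ} (hx : 0 < x) :
    0 < ∑ i ∈ range n, coeff n (i + 1) * x ^ i := by
  refine sum_pos' (fun i _ => mul_nonneg (coeff_nonneg hn _) (pow_nonneg hx.le i))
    ⟨0, mem_range.2 (by omega), ?_⟩
  unfold coeff
  rw [if_pos (by omega)]
  simp

/-- for `n ≥ 2` and `1 ≤ B ≤ B'`, `u_{n,B}(j) ≤ u_{n,B'}(j)` for every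
`j ∈ {1,…,n}`; i.e. `u_{n,B}(j)` is nondecreasing in `B` on `[1,∞)`. -/
theorem uNB_mono_in_B (n : ℕ) (hn : 2 ≤ n) (B B' : ℝ) (hB : 1 ≤ B) (hBB' : B ≤ B') :
    ∀ j ∈ Finset.Icc 1 n, uNB n B j ≤ uNB n B' j := by
  intro j hj
  have hB0 : 0 < B := one_pos.trans_le hB
  have hB'0 : 0 < B' := hB0.trans_le hBB'
  rw [uNB_eq hj hB0, uNB_eq hj hB'0]
  refine mul_le_mul_of_nonneg_left ?_ (Nat.cast_nonneg _)
  rw [div_le_div_iff₀ (denom_pos hn (inv_pos.2 hB0)) (denom_pos hn (inv_pos.2 hB'0))]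
  refine sum_mul_sum_le n (fun i => coeff n (i + j)) (fun i => coeff n (i + 1)) (fun i l hil => ?_)
    (inv_pos.2 hB'0).le (inv_anti₀ hB0 hBB')
  obtain ⟨m, rfl⟩ := Nat.exists_eq_add_of_le (mem_Icc.1 hj).1
  simpa only [add_assoc] using coeff_mul_le hn (Nat.add_le_add_right hil 1) m
end

section
/- Let n ≥ 2, B ≥ 1 be real with B = (1+δ)/(1−δ) for some δ ∈ [0,1), and let u : ℕ → ℝ satisfy u(0) = 0, u(1) = 1 and u(j) ≥ 0 for all j. Define w_sc : ℕ → ℝ by w_sc(0) = 0 and w_sc(k) = 1 for k ≥ 1. Then the infimum of μ over all pairs (λ, μ) with λ ≥ 0 and μ ∈ ℝ satisfying μ·w_sc(a+x) ≥ w_sc(b+x) + λ·[B·a·u(a+x) − b·u(a+x+1)] for all a, x, b ∈ ℕ with 1 ≤ a+x+b ≤ n, equals max over j ∈ {1,…,n−1} of max{ B·(j+1)·u(j+1), B·j·u(j+1) + 1, B·j·u(j) − u(j+1) + 1 }, and this infimum is attained at λ = 1. -/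
/-!
Every feasible `lam` is at least `1`: this is the constraint `(a, x, b) = (0, 0, 1)`.
At `j`, the three terms of the maximum are the right-hand sides at `lam = 1` of the constraints
`(j + 1, 0, 0)`, `(j, 1, 0)` and `(j, 0, 1)`. Raising `lam` above `1` can only lower such a
right-hand side when the bracket is negative, which happens only for `(j, 0, 1)`; the term is then
below `1`, while the constraint `(j, 1, 0)` already forces `1 ≤ μ`. So `X` is a lower bound.

Conversely, at `lam = 1` every constraint with `a + x ≥ 1` is dominated by one of the three
terms: with `k = a + x`, by the second term at `k - 1` if `x ≥ 1`, by the third at `k` if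
`x = 0, b ≥ 1`, and by the first at `k - 1` if `x = b = 0`. The constraints for which `k - 1 = 0`
is out of range are bounded using `u 1 = 1`. Hence `(1, X)` is feasible and `X` is the minimum.
-/

open Finset Filter

/-- The dual feasibility constraints: `μ·w_sc(a+x) ≥ w_sc(b+x) + λ[B·a·u(a+x) − b·u(a+x+1)]`
for all `a, x, b ∈ ℕ` with `1 ≤ a+x+b ≤ n`. -/
def DualFeasible (u : ℕ → ℝ) (B : ℝ) (n : ℕ) (lam μ : ℝ) : Prop :=
  ∀ a x b : ℕ, 1 ≤ a + x + b → a + x + b ≤ n →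
    wsc (b + x) + lam * (B * (a : ℝ) * u (a + x) - (b : ℝ) * u (a + x + 1)) ≤
      μ * wsc (a + x)

/-- Each of the three terms at `j` is at most `μ` for every feasible `(lam, μ)`. -/
theorem le_of_dualFeasible {n : ℕ} {B : ℝ} (hB : 0 ≤ B) {u : ℕ → ℝ} (hu1 : u 1 = 1)
    (hupos : ∀ j, 0 ≤ u j) {lam μ : ℝ} (h : DualFeasible u B n lam μ)
    {j : ℕ} (hj : 1 ≤ j) (hjn : j + 1 ≤ n) :
    B * ((j : ℝ) + 1) * u (j + 1) ≤ μ ∧ B * (j : ℝ) * u (j + 1) + 1 ≤ μ ∧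
      B * (j : ℝ) * u j - u (j + 1) + 1 ≤ μ := by
  have hj0 : j ≠ 0 := by omega
  have hlam : 1 ≤ lam := by
    have := h 0 0 1 (by omega) (by omega)
    simp [wsc, hu1] at this
    linarith
  have h1 := h (j + 1) 0 0 (by omega) (by omega)
  have h2 := h j 1 0 (by omega) (by omega)
  have h3 := h j 0 1 (by omega) (by omega)
  simp [wsc, hj0] at h1 h2 h3
  have p1 : 0 ≤ B * ((j : ℝ) + 1) * u (j + 1) := by have := hupos (j + 1); positivity
  have p2 : 0 ≤ B * (j : ℝ) * u (j + 1) := by have := hupos (j + 1); positivity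
  refine ⟨by nlinarith, by nlinarith, ?_⟩
  rcases le_total 0 (B * (j : ℝ) * u j - u (j + 1)) with hs | hs
  · nlinarith
  · nlinarith

/-- If `X` bounds the three terms for all `j ∈ [1, n - 1]`, then `(1, X)` is feasible. -/
theorem dualFeasible_one {n : ℕ} (hn : 2 ≤ n) {B : ℝ} (hB : 1 ≤ B) {u : ℕ → ℝ} (hu1 : u 1 = 1)
    (hupos : ∀ j, 0 ≤ u j) {X : ℝ}
    (h : ∀ j : ℕ, 1 ≤ j → j + 1 ≤ n → B * ((j : ℝ) + 1) * u (j + 1) ≤ X ∧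
      B * (j : ℝ) * u (j + 1) + 1 ≤ X ∧ B * (j : ℝ) * u j - u (j + 1) + 1 ≤ X) :
    DualFeasible u B n 1 X := by
  intro a x b h1 h2
  obtain ⟨q1, q2, q3⟩ := h 1 le_rfl hn
  norm_num [hu1] at q1 q2 q3
  have hu2 := hupos 2
  have hX1 : 1 ≤ X := by nlinarith
  -- The constraint `(1, 0, 0)`: use the third term at `1` if `u 2 ≤ 1`, the first otherwise.
  have hXB : B ≤ X := by
    rcases le_total (u 2) 1 with hc | hc <;> nlinarith
  rcases Nat.eq_zero_or_pos x with rfl | hx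
  · rcases Nat.eq_zero_or_pos a with rfl | ha
    · have hb : b ≠ 0 := by omega
      have hb1 : (1 : ℝ) ≤ b := by exact_mod_cast (by omega : 1 ≤ b)
      simp [wsc, hb, hu1, hb1]
    · have ha0 : a ≠ 0 := by omega
      rcases Nat.eq_zero_or_pos b with rfl | hb
      · obtain ⟨k, rfl⟩ : ∃ k, a = k + 1 := ⟨a - 1, by omega⟩
        rcases Nat.eq_zero_or_pos k with rfl | hk
        · simpa [wsc, hu1] using hXB
        · simpa [wsc] using (h k hk (by omega)).1
      · have hb0 : b ≠ 0 := by omega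
        have hb1 : (1 : ℝ) ≤ b := by exact_mod_cast hb
        have := (h a ha (by omega)).2.2
        have hu := hupos (a + 1)
        simp [wsc, ha0, hb0]
        nlinarith
  · have hx0 : x ≠ 0 := by omega
    have hbu : 0 ≤ (b : ℝ) * u (a + x + 1) := mul_nonneg (by positivity) (hupos _)
    rcases Nat.eq_zero_or_pos a with rfl | ha
    · simp [wsc, hx0] at hbu ⊢
      linarith
    · obtain ⟨k, rfl⟩ : ∃ k, x = k + 1 := ⟨x - 1, by omega⟩
      have := (h (a + k) (by omega) (by omega)).2.1
      have hmono : B * (a : ℝ) * u (a + (k + 1)) ≤ B * ((a + k : ℕ) : ℝ) * u (a + k + 1) := by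
        have := hupos (a + k + 1)
        rw [← add_assoc]
        gcongr
        omega
      simp only [wsc, Nat.add_eq_zero_iff, one_ne_zero, and_false, if_false]
      linarith

/-- for `n ≥ 2`, `B = (1+δ)/(1−δ)` for some `δ ∈ [0,1)` (so `B ≥ 1`) and
a nonnegative utility basis `u` with `u(0)=0, u(1)=1`, the infimum of `μ` over all dual
feasible pairs `(λ, μ)` with `λ ≥ 0` equals
`max_{j∈[1,n−1]} max{B(j+1)u(j+1), Bju(j+1)+1, Bju(j)−u(j+1)+1}`, and this infimum is
attained at `λ = 1`. -/
theorem dual_LP_value (n : ℕ) (hn : 2 ≤ n) (B : ℝ) (hB1 : 1 ≤ B)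
    (hB : ∃ δ : ℝ, 0 ≤ δ ∧ δ < 1 ∧ B = (1 + δ) / (1 - δ))
    (u : ℕ → ℝ) (hu0 : u 0 = 0) (hu1 : u 1 = 1) (hupos : ∀ j, 0 ≤ u j)
    (X : ℝ)
    (hX : X = (Finset.Icc 1 (n - 1)).sup' (Finset.nonempty_Icc.mpr (by omega))
      (fun j =>
        max (max (B * ((j : ℝ) + 1) * u (j + 1)) (B * (j : ℝ) * u (j + 1) + 1))
          (B * (j : ℝ) * u j - u (j + 1) + 1))) :
    sInf {μ : ℝ | ∃ lam : ℝ, 0 ≤ lam ∧ DualFeasible u B n lam μ} = X ∧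
      DualFeasible u B n 1 X := by
  have hle : ∀ j : ℕ, 1 ≤ j → j + 1 ≤ n → B * ((j : ℝ) + 1) * u (j + 1) ≤ X ∧
      B * (j : ℝ) * u (j + 1) + 1 ≤ X ∧ B * (j : ℝ) * u j - u (j + 1) + 1 ≤ X := by
    intro j hj hjn
    have := Finset.le_sup' (fun j : ℕ =>
        max (max (B * ((j : ℝ) + 1) * u (j + 1)) (B * (j : ℝ) * u (j + 1) + 1))
          (B * (j : ℝ) * u j - u (j + 1) + 1))
      (Finset.mem_Icc.mpr ⟨hj, by omega⟩ : j ∈ Finset.Icc 1 (n - 1))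
    rw [← hX] at this
    simpa only [max_le_iff, and_assoc] using this
  have hfeas := dualFeasible_one hn hB1 hu1 hupos hle
  refine ⟨IsLeast.csInf_eq ⟨⟨1, zero_le_one, hfeas⟩, ?_⟩, hfeas⟩
  rintro μ ⟨lam, -, h⟩
  rw [hX]
  refine Finset.sup'_le _ _ fun j hj => ?_
  rw [Finset.mem_Icc] at hj
  simpa only [max_le_iff, and_assoc] using
    le_of_dualFeasible (by linarith) hu1 hupos h hj.1 (by omega)
end
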